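/- arXiv:1701.06451 — 3 statements merged into one kernel-verified Lean document; each statement's English description precedes it below -/
import Mathlib

section
/- Let H be a regular 3-partite 3-graph (i.e., every vertex has the same positive degree) with n vertices in each vertex class. Then H has a matching of size at least n/2. -/
namespace Tripartite

/-- The degree of a vertex `a` in the first class of a 3-partite 3-multihypergraph,
whose edges are given as a multiset of triples (so parallel edges are allowed). -/
def deg1 {α β γ : Type*} [DecidableEq α] (H : Multiset (α × β × γ)) (a : α) : ℕ :=
  (H.filter fun e => e.1 = a).card

/-- The degree of a vertex `b` in the second class. -/
def deg2 {α β γ : Type*} [DecidableEq β] (H : Multiset (α × β × γ)) (b : β) : ℕ :=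
  (H.filter fun e => e.2.1 = b).card

/-- The degree of a vertex `c` in the third class. -/
def deg3 {α β γ : Type*} [DecidableEq γ] (H : Multiset (α × β × γ)) (c : γ) : ℕ :=
  (H.filter fun e => e.2.2 = c).card

/-- `H` is `r`-regular: every vertex of every class has degree exactly `r`. -/
def IsRegular {α β γ : Type*} [DecidableEq α] [DecidableEq β] [DecidableEq γ]
    (H : Multiset (α × β × γ)) (r : ℕ) : Prop :=
  (∀ a, deg1 H a = r) ∧ (∀ b, deg2 H b = r) ∧ (∀ c, deg3 H c = r)

/-- A matching of `H`: a set of edges of `H` that are pairwise disjoint. -/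
def IsMatching {α β γ : Type*} (H : Multiset (α × β × γ)) (M : Finset (α × β × γ)) : Prop :=
  (∀ e ∈ M, e ∈ H) ∧
  ∀ e ∈ M, ∀ f ∈ M, e ≠ f → e.1 ≠ f.1 ∧ e.2.1 ≠ f.2.1 ∧ e.2.2 ≠ f.2.2

/-- The matching number ν(H): the maximum size of a matching of `H`. -/
noncomputable def matchNum {α β γ : Type*} (H : Multiset (α × β × γ)) : ℕ :=
  sSup {k | ∃ M : Finset (α × β × γ), IsMatching H M ∧ M.card = k}

section FractionalMatching

variable {α β γ : Type*} [DecidableEq α] [DecidableEq β] [DecidableEq γ]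

/-- The three vertices of an edge, as elements of the disjoint union of the classes. -/
def verts (e : α × β × γ) : Finset (α ⊕ β ⊕ γ) :=
  {Sum.inl e.1, Sum.inr (Sum.inl e.2.1), Sum.inr (Sum.inr e.2.2)}

lemma card_verts (e : α × β × γ) : (verts e).card = 3 := by
  simp [verts]

variable [Fintype α] [Fintype β] [Fintype γ]

/-- The total weight of the edges at a vertex, as a linear function of the edge weights. -/
def load (v : α ⊕ β ⊕ γ) : (α × β × γ → ℝ) →ₗ[ℝ] ℝ :=
  ∑ e with v ∈ verts e, LinearMap.proj e

lemma load_apply (v : α ⊕ β ⊕ γ) (w : α × β × γ → ℝ) :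
    load v w = ∑ e with v ∈ verts e, w e := by
  simp [load]

lemma sum_load_inl (x : α × β × γ → ℝ) : ∑ a, load (Sum.inl a) x = ∑ e, x e := by
  simp_rw [load_apply]
  rw [← Finset.sum_fiberwise (s := Finset.univ) (g := fun e : α × β × γ => e.1)]
  simp [verts, eq_comm]

lemma sum_load_inr_inl (x : α × β × γ → ℝ) :
    ∑ b, load (Sum.inr (Sum.inl b)) x = ∑ e, x e := by
  simp_rw [load_apply]
  rw [← Finset.sum_fiberwise (s := Finset.univ) (g := fun e : α × β × γ => e.2.1)]
  simp [verts, eq_comm]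

/-- A ray issuing from a point of a polyhedron that leaves the polyhedron, and along which the
tight constraints stay tight, meets a constraint that was not tight at the start. -/
lemma exists_first_tight {ι : Type*} [Finite ι] (a b : ι → ℝ) (ha : ∀ i, 0 ≤ a i)
    (hab : ∀ i, a i = 0 → b i = 0) (hb : ∃ i, b i < 0) :
    ∃ t : ℝ, 0 ≤ t ∧ (∀ i, 0 ≤ a i + t * b i) ∧ ∃ i, a i ≠ 0 ∧ a i + t * b i = 0 := by
  have : Fintype ι := Fintype.ofFinite ι
  obtain ⟨j, hj, hmin⟩ := Finset.exists_min_image (Finset.univ.filter fun i => b i < 0)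
    (fun i => a i / (-b i)) (by obtain ⟨i, hi⟩ := hb; exact ⟨i, by simpa using hi⟩)
  simp only [Finset.mem_filter, Finset.mem_univ, true_and] at hj hmin
  have ht : 0 ≤ a j / (-b j) := div_nonneg (ha j) (by linarith)
  refine ⟨a j / (-b j), ht, fun i => ?_, j, fun h => hj.ne (hab j h), ?_⟩
  · rcases lt_or_ge (b i) 0 with hi | hi
    · have := hmin i hi
      rw [le_div_iff₀ (by linarith)] at this
      linarith
    · have := mul_nonneg ht hi
      linarith [ha i]
  · field_simp [hj.ne]
    ring

/-- If a nonzero edge weighting has all weights below `1 / 2`, then it can be perturbed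
within its support without changing the load of any saturated vertex. -/
lemma exists_perturbation (w : α × β × γ → ℝ)
    (hhalf : ∀ e, w e < 1 / 2) (hne : ∃ e, w e ≠ 0) :
    ∃ x : α × β × γ → ℝ, x ≠ 0 ∧ (∀ e, w e = 0 → x e = 0) ∧
      ∀ v, load v w = 1 → load v x = 0 := by
  classical
  let E : Finset (α × β × γ) := {e | w e ≠ 0}
  let S : Finset (α ⊕ β ⊕ γ) := {v | load v w = 1}
  have hdeg : ∀ v ∈ S, 3 ≤ (E.filter fun e => v ∈ verts e).card := by
    intro v hv
    have hv : load v w = 1 := by simpa [S] using hv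
    by_contra! hlt
    have hsum : ∑ e ∈ E with v ∈ verts e, w e = 1 := by
      rw [← hv, load_apply, Finset.filter_filter, Finset.sum_filter, Finset.sum_filter]
      refine Finset.sum_congr rfl fun e _ => ?_
      by_cases h : w e = 0 <;> simp [h]
    have hnon : (E.filter fun e => v ∈ verts e).Nonempty := by
      by_contra h
      rw [Finset.not_nonempty_iff_eq_empty.1 h] at hsum
      simp at hsum
    have h := Finset.sum_lt_sum_of_nonempty hnon fun e _ => hhalf e
    rw [hsum, Finset.sum_const, nsmul_eq_mul] at h
    have : ((E.filter fun e => v ∈ verts e).card : ℝ) ≤ 2 := by exact_mod_cast (by omega)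
    linarith
  have hcount : ∑ v ∈ S, (E.filter fun e => v ∈ verts e).card
      = ∑ e ∈ E, (S.filter fun v => v ∈ verts e).card :=
    Finset.sum_card_bipartiteAbove_eq_sum_card_bipartiteBelow _
  have hle3 : ∀ e ∈ E, (S.filter fun v => v ∈ verts e).card ≤ 3 := fun e _ => by
    rw [← card_verts e]
    exact Finset.card_le_card fun v hv => (Finset.mem_filter.1 hv).2
  have hS : S.card * 3 ≤ ∑ v ∈ S, (E.filter fun e => v ∈ verts e).card := by
    simpa using Finset.card_nsmul_le_sum S _ 3 hdeg
  have hE : ∑ e ∈ E, (S.filter fun v => v ∈ verts e).card ≤ E.card * 3 := by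
    simpa using Finset.sum_le_card_nsmul E _ 3 hle3
  let ext : (E → ℝ) →ₗ[ℝ] (α × β × γ → ℝ) := Function.ExtendByZero.linearMap ℝ Subtype.val
  have ext_mem : ∀ y (e : E), ext y e = y e := fun y e =>
    Subtype.val_injective.extend_apply y 0 e
  have ext_not_mem : ∀ y e, e ∉ E → ext y e = 0 := fun y e he =>
    Function.extend_apply' (f := (Subtype.val : E → α × β × γ)) y 0 e
      (by rintro ⟨f, rfl⟩; exact he f.2)
  let L : (E → ℝ) →ₗ[ℝ] (S → ℝ) := LinearMap.pi fun v => load v.1 ∘ₗ ext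
  have hL : ∀ y v, L y v = load v.1 (ext y) := fun _ _ => rfl
  suffices h : ¬ Function.Injective L by
    rw [← LinearMap.ker_eq_bot, ← ne_eq, Submodule.ne_bot_iff] at h
    obtain ⟨y, hy, hy0⟩ := h
    refine ⟨ext y, fun h0 => hy0 ?_, fun e he => ext_not_mem y e (by simp [E, he]), ?_⟩
    · ext e
      rw [← ext_mem y e, h0]; rfl
    · intro v hv
      have := congrFun (LinearMap.mem_ker.1 hy) ⟨v, by simp [S, hv]⟩
      rwa [hL] at this
  intro hinj
  have hcard : E.card ≤ S.card := by
    simpa using LinearMap.finrank_le_finrank_of_injective hinj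
  have hcard_eq : E.card = S.card := by omega
  have hall : ∀ e ∈ E, (S.filter fun v => v ∈ verts e).card = 3 := by
    rw [← Finset.sum_eq_sum_iff_of_le hle3]
    simp only [Finset.sum_const, smul_eq_mul]
    omega
  have hsub : ∀ e ∈ E, ∀ v ∈ verts e, v ∈ S := by
    intro e he v hv
    have heq : S.filter (fun v => v ∈ verts e) = verts e :=
      Finset.eq_of_subset_of_card_le (fun v hv => (Finset.mem_filter.1 hv).2)
        (by rw [hall e he, card_verts])
    rw [← heq] at hv
    exact (Finset.mem_filter.1 hv).1
  have hsurj : Function.Surjective L :=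
    (LinearMap.injective_iff_surjective_of_finrank_eq_finrank (by simpa using hcard_eq)).1 hinj
  obtain ⟨e₀, he₀⟩ := hne
  have ha₀ : Sum.inl e₀.1 ∈ S := hsub e₀ (by simp [E, he₀]) _ (by simp [verts])
  obtain ⟨y, hy⟩ := hsurj (Pi.single ⟨_, ha₀⟩ 1)
  have hload : ∀ v, load v (ext y) = if v = Sum.inl e₀.1 then 1 else 0 := by
    intro v
    by_cases hv : v ∈ S
    · have := congrFun hy ⟨v, hv⟩
      rw [hL] at this
      simpa [Pi.single_apply] using this
    · rw [if_neg (by rintro rfl; exact hv ha₀), load_apply]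
      refine Finset.sum_eq_zero fun e he => ext_not_mem y e fun heE => hv ?_
      exact hsub e heE v (Finset.mem_filter.1 he).2
  have h1 := sum_load_inl (ext y)
  have h2 := sum_load_inr_inl (ext y)
  simp only [hload] at h1 h2
  simp at h1 h2
  linarith

/-- The weight of the edges meeting a given edge `e` of weight at least `1 / 2` in a fractional
matching is at most `2`. -/
lemma sum_meeting_le_two (w : α × β × γ → ℝ) (hw : ∀ e, 0 ≤ w e) (hl : ∀ v, load v w ≤ 1)
    (e : α × β × γ) (he : 1 / 2 ≤ w e) :
    ∑ f with ¬ Disjoint (verts e) (verts f), w f ≤ 2 := by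
  have hswap : ∑ v ∈ verts e, load v w = ∑ f, ((verts e ∩ verts f).card : ℝ) * w f := by
    simp_rw [load_apply, Finset.sum_filter]
    rw [Finset.sum_comm]
    refine Finset.sum_congr rfl fun f _ => ?_
    rw [← Finset.sum_filter, Finset.sum_const, nsmul_eq_mul, Finset.filter_mem_eq_inter]
  have hload : ∑ v ∈ verts e, load v w ≤ 3 := by
    simpa [card_verts] using Finset.sum_le_card_nsmul (verts e) _ 1 fun v _ => hl v
  have hterm : ∀ f, (if ¬ Disjoint (verts e) (verts f) then w f else 0)
      + (if f = e then 2 * w e else 0) ≤ ((verts e ∩ verts f).card : ℝ) * w f := by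
    intro f
    by_cases hfe : f = e
    · subst hfe
      have : ¬ Disjoint (verts f) (verts f) := by simp [verts]
      simp only [this, not_false_eq_true, if_true, Finset.inter_self, card_verts]
      push_cast; linarith
    · by_cases hd : Disjoint (verts e) (verts f)
      · simp only [hd, hfe, not_true_eq_false, if_false, add_zero]
        exact mul_nonneg (Nat.cast_nonneg _) (hw f)
      · simp only [hd, hfe, not_false_eq_true, if_true, if_false, add_zero]
        have : (1 : ℝ) ≤ (verts e ∩ verts f).card := by
          rw [Finset.disjoint_iff_inter_eq_empty, ← Finset.card_eq_zero] at hd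
          exact_mod_cast Nat.one_le_iff_ne_zero.2 hd
        nlinarith [hw f]
  have := Finset.sum_le_sum fun f (_ : f ∈ Finset.univ) => hterm f
  rw [Finset.sum_add_distrib, ← hswap, Finset.sum_ite_eq' Finset.univ e, if_pos (Finset.mem_univ e),
    ← Finset.sum_filter] at this
  linarith

/-- Every fractional matching `w` admits a matching within its support of size at least half the
total weight of `w`. -/
theorem exists_matching_of_fractional (w : α × β × γ → ℝ) (hw : ∀ e, 0 ≤ w e)
    (hl : ∀ v, load v w ≤ 1) :
    ∃ M : Finset (α × β × γ), (∀ e ∈ M, w e ≠ 0) ∧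
      (∀ e ∈ M, ∀ f ∈ M, e ≠ f → Disjoint (verts e) (verts f)) ∧ ∑ e, w e ≤ 2 * M.card := by
  classical
  induction hm : (Finset.univ.filter fun e => w e ≠ 0).card * (Fintype.card (α ⊕ β ⊕ γ) + 1)
      + (Finset.univ.filter fun v => 1 - load v w ≠ 0).card using Nat.strong_induction_on
    generalizing w with
  | _ m ih =>
  subst hm
  by_cases hne : ∃ e, w e ≠ 0
  swap
  · push Not at hne
    exact ⟨∅, by simp [hne]⟩
  by_cases hhalf : ∀ e, w e < 1 / 2
  · obtain ⟨x, hx0, hxsupp, hxload, hxsum⟩ : ∃ x : α × β × γ → ℝ, x ≠ 0 ∧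
        (∀ e, w e = 0 → x e = 0) ∧ (∀ v, load v w = 1 → load v x = 0) ∧ 0 ≤ ∑ e, x e := by
      obtain ⟨x, hx0, hxsupp, hxload⟩ := exists_perturbation w hhalf hne
      rcases le_total 0 (∑ e, x e) with h | h
      · exact ⟨x, hx0, hxsupp, hxload, h⟩
      · refine ⟨-x, neg_ne_zero.2 hx0, fun e he => by simp [hxsupp e he],
          fun v hv => by simp [hxload v hv], by simpa using h⟩
    obtain ⟨t, ht, hnonneg, htight⟩ := exists_first_tight
      (Sum.elim w fun v => 1 - load v w) (Sum.elim x fun v => - load v x)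
      (by rintro (e | v) <;> simp [hw, hl])
      (by
        rintro (e | v) h
        · exact hxsupp e h
        · simp only [Sum.elim_inr] at h ⊢
          rw [hxload v (by linarith), neg_zero])
      (by
        by_contra! hcon
        have hxnn : ∀ e, 0 ≤ x e := fun e => hcon (Sum.inl e)
        apply hx0
        ext e
        have h1 : load (Sum.inl e.1) x ≤ 0 := by simpa using hcon (Sum.inr (Sum.inl e.1))
        rw [load_apply] at h1
        have he : e ∈ Finset.univ.filter fun f : α × β × γ => Sum.inl e.1 ∈ verts f := by
          simp [verts]
        have h2 := Finset.single_le_sum (f := x) (fun f _ => hxnn f) he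
        exact le_antisymm (h2.trans h1) (hxnn e))
    have hloadeq : ∀ v, 1 - load v (w + t • x) = 1 - load v w + t * -load v x := fun v => by
      rw [map_add, map_smul, smul_eq_mul]; ring
    have hsupp : ∀ e, w e = 0 → (w + t • x) e = 0 := fun e he => by simp [he, hxsupp e he]
    have hsat : ∀ v, 1 - load v w = 0 → 1 - load v (w + t • x) = 0 := fun v hv => by
      rw [hloadeq, hv, hxload v (by linarith)]; simp
    have hsub1 : (Finset.univ.filter fun e => (w + t • x) e ≠ 0)
        ⊆ Finset.univ.filter fun e => w e ≠ 0 :=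
      Finset.monotone_filter_right _ fun e _ h h' => h (hsupp e h')
    have hsub2 : (Finset.univ.filter fun v => 1 - load v (w + t • x) ≠ 0)
        ⊆ Finset.univ.filter fun v => 1 - load v w ≠ 0 :=
      Finset.monotone_filter_right _ fun v _ h h' => h (hsat v h')
    have hlt : (Finset.univ.filter fun e => (w + t • x) e ≠ 0).card
          * (Fintype.card (α ⊕ β ⊕ γ) + 1)
          + (Finset.univ.filter fun v => 1 - load v (w + t • x) ≠ 0).card
        < (Finset.univ.filter fun e => w e ≠ 0).card * (Fintype.card (α ⊕ β ⊕ γ) + 1)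
          + (Finset.univ.filter fun v => 1 - load v w ≠ 0).card := by
      obtain ⟨e | v, hi, hi'⟩ := htight
      · refine add_lt_add_of_lt_of_le (Nat.mul_lt_mul_of_pos_right (Finset.card_lt_card
          ((Finset.ssubset_iff_of_subset hsub1).2 ⟨e, ?_⟩)) (Nat.succ_pos _))
          (Finset.card_le_card hsub2)
        simpa using ⟨hi, hi'⟩
      · refine add_lt_add_of_le_of_lt (Nat.mul_le_mul_right _ (Finset.card_le_card hsub1))
          (Finset.card_lt_card ((Finset.ssubset_iff_of_subset hsub2).2 ⟨v, ?_⟩))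
        simp only [Finset.mem_filter, Finset.mem_univ, true_and, not_not, hloadeq]
        exact ⟨hi, hi'⟩
    obtain ⟨M, hM, hdisj, hsum⟩ := ih _ hlt (w + t • x)
      (fun e => hnonneg (Sum.inl e))
      (fun v => by
        have h1 : 0 ≤ 1 - load v w + t * -load v x := hnonneg (Sum.inr v)
        rw [← hloadeq] at h1
        linarith) rfl
    refine ⟨M, fun e he h => hM e he (hsupp e h), hdisj, le_trans ?_ hsum⟩
    simp only [Pi.add_apply, Pi.smul_apply, smul_eq_mul, Finset.sum_add_distrib,
      ← Finset.mul_sum]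
    linarith [mul_nonneg ht hxsum]
  · push Not at hhalf
    obtain ⟨e, he⟩ := hhalf
    let w' : α × β × γ → ℝ := fun f => if Disjoint (verts e) (verts f) then w f else 0
    have hw'le : ∀ f, w' f ≤ w f := fun f => by
      by_cases h : Disjoint (verts e) (verts f) <;> simp [w', h, hw f]
    have hw'nn : ∀ f, 0 ≤ w' f := fun f => by
      by_cases h : Disjoint (verts e) (verts f) <;> simp [w', h, hw f]
    have hw'ne : ∀ f, w' f ≠ 0 → Disjoint (verts e) (verts f) ∧ w f ≠ 0 := fun f hf => by
      simpa [w'] using hf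
    have hee : ¬ Disjoint (verts e) (verts e) := by simp [verts]
    have hcard : (Finset.univ.filter fun f => w' f ≠ 0).card
        < (Finset.univ.filter fun f => w f ≠ 0).card := by
      refine Finset.card_lt_card ((Finset.ssubset_iff_of_subset
        (Finset.monotone_filter_right _ fun f _ h => (hw'ne f h).2)).2 ⟨e, ?_, ?_⟩)
      · simp only [Finset.mem_filter, Finset.mem_univ, true_and]
        linarith
      · simp only [w', if_neg hee, ne_eq, not_true_eq_false, Finset.mem_filter, and_false,
          not_false_eq_true]
    have hunsat : (Finset.univ.filter fun v => 1 - load v w' ≠ 0).card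
        ≤ Fintype.card (α ⊕ β ⊕ γ) := Finset.card_le_univ _
    obtain ⟨M, hM, hdisj, hsum⟩ := ih _ (by nlinarith) w' hw'nn (fun v => by
      refine le_trans ?_ (hl v)
      rw [load_apply, load_apply]
      exact Finset.sum_le_sum fun f _ => hw'le f) rfl
    have heM : e ∉ M := fun h => hee (hw'ne e (hM e h)).1
    refine ⟨insert e M, ?_, ?_, ?_⟩
    · intro f hf
      rcases Finset.mem_insert.1 hf with rfl | hf
      · linarith
      · exact (hw'ne f (hM f hf)).2
    · intro f hf g hg hfg
      rcases Finset.mem_insert.1 hf with rfl | hf' <;>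
        rcases Finset.mem_insert.1 hg with rfl | hg'
      · exact absurd rfl hfg
      · exact (hw'ne g (hM g hg')).1
      · exact (hw'ne f (hM f hf')).1.symm
      · exact hdisj f hf' g hg' hfg
    · rw [Finset.card_insert_of_notMem heM]
      have h2 := sum_meeting_le_two w hw hl e he
      have hsplit := Finset.sum_filter_add_sum_filter_not Finset.univ
        (fun f => Disjoint (verts e) (verts f)) w
      rw [Finset.sum_filter] at hsplit
      push_cast
      linarith

lemma sum_count_filter (H : Multiset (α × β × γ)) (p : α × β × γ → Prop) [DecidablePred p] :
    ∑ e with p e, H.count e = (H.filter p).card := by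
  rw [← Multiset.sum_count_eq_card (s := Finset.univ) (fun _ _ => Finset.mem_univ _),
    Finset.sum_filter]
  simp only [Multiset.count_filter]

end FractionalMatching

/-- A regular 3-partite 3-graph of positive degree with `n` vertices in each class
has a matching of size at least `n / 2`. -/
theorem stmt0 {α β γ : Type*} [Fintype α] [Fintype β] [Fintype γ]
    [DecidableEq α] [DecidableEq β] [DecidableEq γ]
    (H : Multiset (α × β × γ)) (n r : ℕ) (hr : 0 < r) (hreg : IsRegular H r)
    (hA : Fintype.card α = n) (hB : Fintype.card β = n) (hC : Fintype.card γ = n) :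
    n ≤ 2 * matchNum H := by
  have hr' : (r : ℝ) ≠ 0 := by exact_mod_cast hr.ne'
  let w : α × β × γ → ℝ := fun e => H.count e / r
  have hload : ∀ v, load v w = 1 := by
    intro v
    have hdeg : ∑ e with v ∈ verts e, H.count e = r := by
      rw [sum_count_filter]
      rcases v with a | b | c
      · simpa [verts, deg1, eq_comm] using hreg.1 a
      · simpa [verts, deg2, eq_comm] using hreg.2.1 b
      · simpa [verts, deg3, eq_comm] using hreg.2.2 c
    rw [load_apply, ← Finset.sum_div, ← Nat.cast_sum, hdeg, div_self hr']
  obtain ⟨M, hM, hdisj, hsum⟩ := exists_matching_of_fractional w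
    (fun e => by positivity) (fun v => (hload v).le)
  have hn : (n : ℝ) ≤ 2 * M.card := by
    rw [← sum_load_inl] at hsum
    simpa [hload, hA] using hsum
  have hmatch : IsMatching H M := by
    refine ⟨fun e he => ?_, fun e he f hf hef => ?_⟩
    · by_contra h
      exact hM e he (by simp [w, Multiset.count_eq_zero.2 h])
    · have := hdisj e he f hf hef
      simp only [verts, Finset.disjoint_left, Finset.mem_insert, Finset.mem_singleton] at this
      refine ⟨fun h => ?_, fun h => ?_, fun h => ?_⟩ <;> simp [h] at this
  have hle : M.card ≤ matchNum H :=
    le_csSup ⟨Fintype.card (α × β × γ), by rintro _ ⟨N, -, rfl⟩; exact Finset.card_le_univ N⟩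
      ⟨M, hmatch, rfl⟩
  have : n ≤ 2 * M.card := by exact_mod_cast hn
  omega

end Tripartite
end

section
/- Let H be a 3-partite 3-graph. Then τ(H) ≤ 2ν(H), where τ(H) is the minimum size of a vertex cover of H and ν(H) is the maximum size of a matching in H (Aharoni's Theorem). -/
namespace Tripartite

/-- A vertex cover of `H`: a set of vertices (given by its intersection with each of
the three classes) meeting every edge of `H`. -/
def IsCover {α β γ : Type*} (H : Multiset (α × β × γ))
    (S1 : Finset α) (S2 : Finset β) (S3 : Finset γ) : Prop :=
  ∀ e ∈ H, e.1 ∈ S1 ∨ e.2.1 ∈ S2 ∨ e.2.2 ∈ S3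

/-- The vertex cover number τ(H): the minimum size of a vertex cover of `H`. -/
noncomputable def coverNum {α β γ : Type*} (H : Multiset (α × β × γ)) : ℕ :=
  sInf {k | ∃ (S1 : Finset α) (S2 : Finset β) (S3 : Finset γ),
    IsCover H S1 S2 S3 ∧ S1.card + S2.card + S3.card = k}

section Chains

variable {V : Type*} {R : V → V → Prop}

/-- `S` is independent for the conflict relation `R`. -/
def Indep (R : V → V → Prop) (S : Finset V) : Prop :=
  ∀ x ∈ S, ∀ y ∈ S, R x y → x = y

/-- The chain `f` is carried by the `R`-independent subsets of `W` with `j` elements. -/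
def Carried (R : V → V → Prop) (W : Finset V) (j : ℕ) (f : Finset V → ZMod 2) : Prop :=
  ∀ σ, f σ ≠ 0 → σ ⊆ W ∧ Indep R σ ∧ σ.card = j

/-- Every element of `I` is in conflict with (or equal to) some element of `D`. -/
def Dominates (R : V → V → Prop) (D I : Finset V) : Prop :=
  ∀ x ∈ I, ∃ y ∈ D, R x y

lemma Carried.mono {W W' : Finset V} {j : ℕ} {f : Finset V → ZMod 2} (h : Carried R W j f)
    (hW : W ⊆ W') : Carried R W' j f :=
  fun σ hσ => ⟨(h σ hσ).1.trans hW, (h σ hσ).2⟩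

lemma Carried.add {W : Finset V} {j : ℕ} {f g : Finset V → ZMod 2} (hf : Carried R W j f)
    (hg : Carried R W j g) : Carried R W j (f + g) := by
  intro σ hσ
  by_cases h : f σ = 0
  · exact hg σ fun h' => hσ (by simp [h, h'])
  · exact hf σ h

lemma Carried.sum {ι : Type*} {W : Finset V} {j : ℕ} {s : Finset ι} {f : ι → Finset V → ZMod 2}
    (hf : ∀ i ∈ s, Carried R W j (f i)) : Carried R W j (∑ i ∈ s, f i) := by
  intro σ hσ
  rw [Finset.sum_apply] at hσ
  obtain ⟨i, hi, h⟩ := Finset.exists_ne_zero_of_sum_ne_zero hσ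
  exact hf i hi σ h

lemma sum_sum_erase_eq_zero {ι : Type*} [DecidableEq ι] (s : Finset ι) (F : ι → ι → ZMod 2)
    (hF : ∀ i j, F i j = F j i) : ∑ i ∈ s, ∑ j ∈ s.erase i, F i j = 0 := by
  rw [Finset.sum_sigma']
  refine Finset.sum_involution (fun p _ => ⟨p.2, p.1⟩) ?_ ?_ ?_ ?_
  · rintro ⟨i, j⟩ -
    simp only [hF j i]
    exact CharTwo.add_self_eq_zero _
  · rintro ⟨i, j⟩ h -
    simp only [Finset.mem_sigma, Finset.mem_erase] at h
    intro heq
    simp only [Sigma.mk.injEq] at heq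
    exact h.2.1 heq.1
  · rintro ⟨i, j⟩ h
    simp only [Finset.mem_sigma, Finset.mem_erase] at h ⊢
    exact ⟨h.2.2, h.2.1.symm, h.1⟩
  · rintro ⟨i, j⟩ -
    rfl

variable [DecidableEq V]

/-- The cone over a chain with apex `v`. -/
def cone (v : V) (f : Finset V → ZMod 2) (σ : Finset V) : ZMod 2 :=
  if v ∈ σ then f (σ.erase v) else 0

lemma Carried.cone (hsymm : ∀ x y, R x y → R y x) {W U : Finset V} {j : ℕ} {v : V}
    (hv : v ∈ W) (hU : U ⊆ W) (hvU : ∀ u ∈ U, R v u → u = v) {f : Finset V → ZMod 2}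
    (hf : Carried R U j f) : Carried R W (j + 1) (cone v f) := by
  intro σ hσ
  have hmem : v ∈ σ := by
    by_contra h
    exact hσ (if_neg h)
  rw [Tripartite.cone, if_pos hmem] at hσ
  obtain ⟨hsub, hind, hcard⟩ := hf _ hσ
  have hR : ∀ u ∈ σ, R v u → u = v := by
    intro u hu huv
    by_contra hne
    exact hne (hvU u (hsub (Finset.mem_erase.2 ⟨hne, hu⟩)) huv)
  refine ⟨?_, ?_, ?_⟩
  · rw [← Finset.insert_erase hmem]
    exact Finset.insert_subset hv (hsub.trans hU)
  · intro x hx y hy hxy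
    by_cases hxv : x = v
    · subst hxv
      exact (hR y hy hxy).symm
    by_cases hyv : y = v
    · subst hyv
      exact hR x hx (hsymm _ _ hxy)
    exact hind x (Finset.mem_erase.2 ⟨hxv, hx⟩) y (Finset.mem_erase.2 ⟨hyv, hy⟩) hxy
  · rw [← hcard, Finset.card_erase_add_one hmem]

lemma card_filter_image_erase {A : Type*} [DecidableEq A] (color : V → A) {a : A} {B : Finset A}
    (ha : a ∉ B) {σ : Finset V} (hcard : σ.card = B.card + 1) (hσ : σ.image color ⊆ insert a B) :
    ((σ.filter fun u => (σ.erase u).image color = B).card : ZMod 2) =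
      if σ.image color = insert a B then 1 else 0 := by
  split_ifs with h
  · have hinj : Set.InjOn color σ := by
      rw [← Finset.card_image_iff, h, Finset.card_insert_of_notMem ha, hcard]
    obtain ⟨u, hu, hua⟩ : ∃ u ∈ σ, color u = a := by
      rw [← Finset.mem_image, h]
      exact Finset.mem_insert_self _ _
    have : (σ.filter fun u => (σ.erase u).image color = B) = {u} := by
      ext w
      simp only [Finset.mem_filter, Finset.mem_singleton]
      constructor
      · rintro ⟨hw, hB⟩
        by_contra hne
        apply ha
        rw [← hB, Finset.mem_image]
        exact ⟨u, Finset.mem_erase.2 ⟨Ne.symm hne, hu⟩, hua⟩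
      · rintro rfl
        refine ⟨hu, ?_⟩
        ext b
        constructor
        · intro hb
          obtain ⟨w', hw', rfl⟩ := Finset.mem_image.1 hb
          obtain ⟨hne, hmem⟩ := Finset.mem_erase.1 hw'
          refine (Finset.mem_insert.1 (h ▸ Finset.mem_image_of_mem _ hmem)).resolve_left ?_
          intro heq
          exact hne (hinj hmem hu (heq.trans hua.symm))
        · intro hb
          obtain ⟨w', hw', rfl⟩ := Finset.mem_image.1
            (h.symm ▸ Finset.mem_insert_of_mem hb : b ∈ σ.image color)
          refine Finset.mem_image_of_mem _ (Finset.mem_erase.2 ⟨?_, hw'⟩)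
          rintro rfl
          exact ha (hua ▸ hb)
    rw [this]
    simp
  · obtain hempty | ⟨u, hu⟩ :=
      (σ.filter fun u => (σ.erase u).image color = B).eq_empty_or_nonempty
    · rw [hempty]
      simp
    obtain ⟨huσ, huB⟩ := Finset.mem_filter.1 hu
    have hinj : Set.InjOn color (σ.erase u : Finset V) := by
      rw [← Finset.card_image_iff, huB, Finset.card_erase_of_mem huσ, hcard]
      rfl
    have himg : σ.image color = insert (color u) B := by
      rw [← huB, ← Finset.image_insert, Finset.insert_erase huσ]
    have hcu : color u ∈ B := by
      refine (Finset.mem_insert.1 (hσ (Finset.mem_image_of_mem _ huσ))).resolve_left ?_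
      intro heq
      exact h (heq ▸ himg)
    obtain ⟨w, hw, hwu⟩ := Finset.mem_image.1 (huB.symm ▸ hcu)
    obtain ⟨hne, hwσ⟩ := Finset.mem_erase.1 hw
    have : (σ.filter fun u => (σ.erase u).image color = B) = {u, w} := by
      ext x
      simp only [Finset.mem_filter, Finset.mem_insert, Finset.mem_singleton]
      constructor
      · rintro ⟨hx, hxB⟩
        by_contra! hxne
        have hcx : color x ∈ (σ.erase x).image color := by
          rw [hxB, ← huB]
          exact Finset.mem_image_of_mem _ (Finset.mem_erase.2 ⟨hxne.1, hx⟩)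
        obtain ⟨y, hy, hyx⟩ := Finset.mem_image.1 hcx
        obtain ⟨hyne, hyσ⟩ := Finset.mem_erase.1 hy
        by_cases hyu : y = u
        · subst hyu
          exact hxne.2 (hinj (Finset.mem_erase.2 ⟨hxne.1, hx⟩) hw (hyx.symm.trans hwu.symm))
        · exact hyne (hinj (Finset.mem_erase.2 ⟨hyu, hyσ⟩) (Finset.mem_erase.2 ⟨hxne.1, hx⟩) hyx)
      · rintro (rfl | rfl)
        · exact ⟨huσ, huB⟩
        · refine ⟨hwσ, ?_⟩
          rw [← huB]
          ext b
          simp only [Finset.mem_image, Finset.mem_erase]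
          constructor
          · rintro ⟨y, ⟨hy, hyσ⟩, rfl⟩
            by_cases hyu : y = u
            · exact ⟨x, ⟨hne, hwσ⟩, by rw [hwu, hyu]⟩
            · exact ⟨y, ⟨hyu, hyσ⟩, rfl⟩
          · rintro ⟨y, ⟨hy, hyσ⟩, rfl⟩
            by_cases hyx : y = x
            · exact ⟨u, ⟨hne.symm, huσ⟩, by rw [← hwu, hyx]⟩
            · exact ⟨y, ⟨hyx, hyσ⟩, rfl⟩
    rw [this, Finset.card_pair hne.symm]
    rfl

variable [Fintype V]

/-- The boundary of a mod 2 chain, a chain being a function on the finite subsets of `V`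
(the empty set included, so that homology is reduced). -/
def boundary (f : Finset V → ZMod 2) (τ : Finset V) : ZMod 2 :=
  ∑ v ∈ τᶜ, f (insert v τ)

lemma boundary_add (f g : Finset V → ZMod 2) : boundary (f + g) = boundary f + boundary g := by
  ext τ
  simp [boundary, Finset.sum_add_distrib]

lemma boundary_sum {ι : Type*} (s : Finset ι) (f : ι → Finset V → ZMod 2) :
    boundary (∑ i ∈ s, f i) = ∑ i ∈ s, boundary (f i) := by
  ext τ
  simp only [boundary, Finset.sum_apply]
  exact Finset.sum_comm

lemma boundary_boundary (f : Finset V → ZMod 2) : boundary (boundary f) = 0 := by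
  ext τ
  simp only [boundary, Finset.compl_insert, Pi.zero_apply]
  exact sum_sum_erase_eq_zero _ (fun v u => f (insert u (insert v τ)))
    fun v u => by rw [Finset.insert_comm]

lemma boundary_cone (v : V) (f : Finset V → ZMod 2) :
    boundary (cone v f) = f + cone v (boundary f) := by
  ext τ
  simp only [boundary, cone, Pi.add_apply]
  by_cases hv : v ∈ τ
  · have hmem : v ∉ τᶜ := by simpa using hv
    have hcompl : (τ.erase v)ᶜ = insert v τᶜ := by
      ext u
      simp only [Finset.mem_compl, Finset.mem_erase, Finset.mem_insert]
      tauto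
    rw [if_pos hv, hcompl, Finset.sum_insert hmem, Finset.insert_erase hv, ← add_assoc,
      CharTwo.add_self_eq_zero, zero_add]
    refine Finset.sum_congr rfl fun u hu => ?_
    have huv : u ≠ v := fun h => hmem (h ▸ hu)
    rw [if_pos (Finset.mem_insert_of_mem hv), Finset.erase_insert_of_ne huv]
  · rw [if_neg hv, add_zero, Finset.sum_eq_single v]
    · simp [hv]
    · intro u _ huv
      simp [hv, huv.symm]
    · intro h
      simp [hv] at h

lemma sum_mul_boundary (g f : Finset V → ZMod 2) :
    ∑ τ, g τ * boundary f τ = ∑ σ, (∑ u ∈ σ, g (σ.erase u)) * f σ := by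
  simp only [boundary, Finset.mul_sum, Finset.sum_mul]
  rw [Finset.sum_sigma', Finset.sum_sigma']
  refine Finset.sum_bij' (fun p _ => ⟨insert p.2 p.1, p.2⟩) (fun p _ => ⟨p.1.erase p.2, p.2⟩)
    ?_ ?_ ?_ ?_ ?_
  · simp
  · simp
  · rintro ⟨τ, v⟩ h
    simp at h
    simp [h]
  · rintro ⟨τ, v⟩ h
    simp at h
    simp [h]
  · rintro ⟨τ, v⟩ h
    simp at h
    simp [h]

/-- The independence complex of `R` on `W` has vanishing reduced mod 2 homology in all
dimensions at most `k - 2`. -/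
def Acyclic (R : V → V → Prop) (W : Finset V) (k : ℕ) : Prop :=
  ∀ j < k, ∀ z, Carried R W j z → boundary z = 0 → ∃ w, Carried R W (j + 1) w ∧ boundary w = z

lemma acyclic_of_isolated (hsymm : ∀ x y, R x y → R y x) {W : Finset V} {v : V} (hv : v ∈ W)
    (hvW : ∀ u ∈ W, R v u → u = v) (k : ℕ) : Acyclic R W k := by
  intro j _ z hz hbz
  refine ⟨cone v z, hz.cone hsymm hv subset_rfl hvW, ?_⟩
  rw [boundary_cone, hbz]
  ext σ
  simp [cone]

open Classical in
lemma acyclic_of_delete_of_link (hrefl : ∀ x, R x x) (hsymm : ∀ x y, R x y → R y x)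
    {W : Finset V} {v : V} (hv : v ∈ W) {k : ℕ} (hdel : Acyclic R (W.erase v) (k + 1))
    (hlink : Acyclic R (W.filter fun u => ¬ R v u) k) : Acyclic R W (k + 1) := by
  intro j hj z hz hbz
  obtain _ | j := j
  · have hz' : Carried R (W.erase v) 0 z := by
      intro σ hσ
      obtain ⟨-, hind, hcard⟩ := hz σ hσ
      rw [Finset.card_eq_zero.1 hcard] at hind ⊢
      exact ⟨Finset.empty_subset _, hind, rfl⟩
    obtain ⟨w, hw, hbw⟩ := hdel 0 hj z hz' hbz
    exact ⟨w, hw.mono (Finset.erase_subset _ _), hbw⟩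
  set y : Finset V → ZMod 2 := fun τ => if v ∈ τ then 0 else z (insert v τ) with hy
  have hyc : Carried R (W.filter fun u => ¬ R v u) j y := by
    intro τ hτ
    have hvτ : v ∉ τ := fun h => hτ (if_pos h)
    simp only [hy, if_neg hvτ] at hτ
    obtain ⟨hsub, hind, hcard⟩ := hz _ hτ
    refine ⟨fun u hu => Finset.mem_filter.2 ⟨hsub (Finset.mem_insert_of_mem hu), fun h => ?_⟩,
      fun a ha b hb => hind a (Finset.mem_insert_of_mem ha) b (Finset.mem_insert_of_mem hb), ?_⟩
    · have := hind v (Finset.mem_insert_self _ _) u (Finset.mem_insert_of_mem hu) h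
      exact hvτ (this ▸ hu)
    · rw [Finset.card_insert_of_notMem hvτ] at hcard
      omega
  have hby : boundary y = 0 := by
    ext τ
    by_cases hvτ : v ∈ τ
    · exact Finset.sum_eq_zero fun u _ => if_pos (Finset.mem_insert_of_mem hvτ)
    · have h := congrFun hbz (insert v τ)
      have hmem : v ∈ τᶜ := by simpa using hvτ
      rw [boundary, Finset.compl_insert] at h
      rw [boundary, ← Finset.add_sum_erase _ _ hmem]
      simp only [hy, Finset.mem_insert_self, if_true, zero_add]
      refine Eq.trans (Finset.sum_congr rfl fun u hu => ?_) h
      have huv : v ≠ u := (Finset.ne_of_mem_erase hu).symm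
      rw [if_neg (by simp [huv, hvτ]), Finset.insert_comm]
  obtain ⟨x, hx, hbx⟩ := hlink j (by omega) y hyc hby
  have hlW : (W.filter fun u => ¬ R v u) ⊆ W := Finset.filter_subset _ _
  have hcx : Carried R W (j + 1 + 1) (cone v x) :=
    hx.cone hsymm hv hlW fun u hu h => absurd h (Finset.mem_filter.1 hu).2
  have hdecomp : boundary (cone v x) = x + cone v y := by rw [boundary_cone, hbx]
  have hsum : Carried R (W.erase v) (j + 1) (z + boundary (cone v x)) := by
    intro σ hσ
    have hxv : v ∈ σ → x σ = 0 := by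
      intro hvσ
      by_contra h
      exact (Finset.mem_filter.1 ((hx σ h).1 hvσ)).2 (hrefl v)
    have hvσ : v ∉ σ := by
      intro hvσ
      apply hσ
      simp [hdecomp, cone, hvσ, hxv hvσ, hy, Finset.insert_erase hvσ, CharTwo.add_self_eq_zero]
    have hσ' : (z + x) σ ≠ 0 := by
      simpa [hdecomp, cone, hvσ] using hσ
    obtain ⟨hsub, hrest⟩ := (hz.add (hx.mono hlW)) σ hσ'
    exact ⟨Finset.subset_erase.2 ⟨hsub, hvσ⟩, hrest⟩
  obtain ⟨w, hw, hbw⟩ := hdel (j + 1) hj _ hsum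
    (by rw [boundary_add, hbz, boundary_boundary, add_zero])
  refine ⟨w + cone v x, (hw.mono (Finset.erase_subset _ _)).add hcx, ?_⟩
  rw [boundary_add, hbw, add_assoc]
  ext σ
  simp [CharTwo.add_self_eq_zero]

open Classical in
lemma acyclic_of_dominates (hrefl : ∀ x, R x x) (hsymm : ∀ x y, R x y → R y x) :
    ∀ (W I : Finset V) (k : ℕ), I ⊆ W → Indep R I →
      (∀ D ⊆ W, Dominates R D I → k ≤ D.card) → Acyclic R W k := by
  intro W
  induction W using Finset.strongInduction with
  | H W ih =>
    intro I k hIW hI hD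
    obtain _ | k := k
    · intro j hj
      omega
    have hne : I.Nonempty := by
      by_contra h
      rw [Finset.not_nonempty_iff_eq_empty] at h
      have := hD ∅ (Finset.empty_subset _) (by simp [h, Dominates])
      simp at this
    obtain ⟨x, hx⟩ := hne
    by_cases hiso : ∀ u ∈ W, R x u → u = x
    · exact acyclic_of_isolated hsymm (hIW hx) hiso _
    push Not at hiso
    obtain ⟨v, hv, hxv, hvx⟩ := hiso
    have hvI : v ∉ I := fun h => hvx (hI x hx v h hxv).symm
    refine acyclic_of_delete_of_link hrefl hsymm hv ?_ ?_
    · exact ih _ (Finset.erase_ssubset hv) I _ (Finset.subset_erase.2 ⟨hIW, hvI⟩) hI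
        fun D hDW => hD D (hDW.trans (Finset.erase_subset _ _))
    · refine ih _ ?_ (I.filter fun u => ¬ R v u) k (Finset.filter_subset_filter _ hIW)
        (fun a ha b hb => hI a (Finset.mem_filter.1 ha).1 b (Finset.mem_filter.1 hb).1) ?_
      · exact Finset.filter_ssubset.2 ⟨v, hv, not_not.2 (hrefl v)⟩
      · intro D hDW hDI
        have h := hD (insert v D)
          (Finset.insert_subset hv (hDW.trans (Finset.filter_subset _ _))) (by
            intro a ha
            by_cases hva : R v a
            · exact ⟨v, Finset.mem_insert_self _ _, hsymm _ _ hva⟩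
            · obtain ⟨b, hb, hab⟩ := hDI a (Finset.mem_filter.2 ⟨ha, hva⟩)
              exact ⟨b, Finset.mem_insert_of_mem hb, hab⟩)
        have := Finset.card_insert_le v D
        omega


lemma exists_chain_family {A : Type*} [DecidableEq A] (color : V → A)
    (hac : ∀ B : Finset A, Acyclic R (Finset.univ.filter fun v => color v ∈ B) B.card) (n : ℕ) :
    ∃ c : Finset A → Finset V → ZMod 2, c ∅ = Pi.single ∅ 1 ∧ ∀ B, B.card ≤ n →
      Carried R (Finset.univ.filter fun v => color v ∈ B) B.card (c B) ∧
      boundary (c B) = ∑ b ∈ B, c (B.erase b) := by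
  induction n with
  | zero =>
    refine ⟨fun _ => Pi.single ∅ 1, rfl, fun B hB => ?_⟩
    obtain rfl : B = ∅ := by simpa using hB
    refine ⟨?_, ?_⟩
    · intro σ hσ
      obtain rfl : σ = ∅ := by
        by_contra h
        exact hσ (by simp [h])
      simp [Indep]
    · ext τ
      simp [boundary, Pi.single_apply]
  | succ n ih =>
    obtain ⟨c, hc0, hc⟩ := ih
    have hfill : ∀ B : Finset A, B.card = n + 1 → ∃ w,
        Carried R (Finset.univ.filter fun v => color v ∈ B) B.card w ∧
        boundary w = ∑ b ∈ B, c (B.erase b) := by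
      intro B hB
      have hcard : ∀ b ∈ B, (B.erase b).card = n := fun b hb => by
        rw [Finset.card_erase_of_mem hb, hB]
        rfl
      rw [hB]
      refine hac B n (by omega) _ (Carried.sum fun b hb => ?_) ?_
      · have h := (hc (B.erase b) (hcard b hb).le).1
        rw [hcard b hb] at h
        exact h.mono (Finset.monotone_filter_right _ fun v _ hv => Finset.mem_of_mem_erase hv)
      · rw [boundary_sum, Finset.sum_congr rfl fun b hb => (hc (B.erase b) (hcard b hb).le).2]
        ext τ
        simp only [Finset.sum_apply]
        exact sum_sum_erase_eq_zero B (fun a b => c ((B.erase a).erase b) τ)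
          fun a b => by rw [Finset.erase_right_comm]
    choose! w hw using hfill
    refine ⟨fun B => if B.card = n + 1 then w B else c B, by simpa using hc0, fun B hB => ?_⟩
    have herase : ∑ b ∈ B, (if (B.erase b).card = n + 1 then w (B.erase b) else c (B.erase b)) =
        ∑ b ∈ B, c (B.erase b) := by
      refine Finset.sum_congr rfl fun b hb => if_neg ?_
      have := Finset.card_erase_add_one hb
      omega
    rw [herase]
    by_cases h : B.card = n + 1
    · simp only [if_pos h]
      exact hw B h
    · simp only [if_neg h]
      exact hc B (by omega)

/-- The topological Hall theorem: if the independence complexes spanned by the colour classes are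
sufficiently acyclic, there is an independent transversal. -/
theorem exists_rainbow_of_acyclic {A : Type*} [Fintype A] [DecidableEq A] (color : V → A)
    (hac : ∀ B : Finset A, Acyclic R (Finset.univ.filter fun v => color v ∈ B) B.card) :
    ∃ S : Finset V, Indep R S ∧ S.card = Fintype.card A ∧ S.image color = Finset.univ := by
  obtain ⟨c, hc0, hc⟩ := exists_chain_family color hac (Fintype.card A)
  replace hc := fun B => hc B (Finset.card_le_univ B)
  have key : ∀ B : Finset A,
      ∑ σ : Finset V, (if σ.image color = B then 1 else 0) * c B σ = 1 := by
    intro B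
    induction B using Finset.induction_on with
    | empty =>
      rw [hc0, Finset.sum_eq_single ∅]
      · simp
      · intro σ _ hσ
        simp [hσ]
      · simp
    | insert a B ha ih =>
      have hadj := sum_mul_boundary (fun τ => if τ.image color = B then 1 else 0) (c (insert a B))
      rw [(hc (insert a B)).2, Finset.sum_congr rfl (g := fun τ : Finset V =>
        (if τ.image color = B then 1 else 0) * c B τ), ih] at hadj
      · refine Eq.trans (Finset.sum_congr rfl fun σ _ => ?_) hadj.symm
        by_cases hσ : c (insert a B) σ = 0
        · simp [hσ]
        obtain ⟨hsub, -, hcard⟩ := (hc (insert a B)).1 σ hσ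
        rw [Finset.card_insert_of_notMem ha] at hcard
        rw [← card_filter_image_erase color ha hcard, Finset.sum_boole]
        intro b hb
        obtain ⟨v, hv, rfl⟩ := Finset.mem_image.1 hb
        exact (Finset.mem_filter.1 (hsub hv)).2
      · intro τ _
        by_cases hτ : τ.image color = B
        · simp only [hτ, if_true, one_mul, Finset.sum_apply]
          rw [Finset.sum_insert ha, Finset.erase_insert ha, add_eq_left]
          refine Finset.sum_eq_zero fun b hb => ?_
          by_contra h
          rw [← hτ] at hb
          obtain ⟨v, hv, rfl⟩ := Finset.mem_image.1 hb
          have := (Finset.mem_filter.1 (((hc _).1 τ h).1 hv)).2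
          simp at this
        · simp [hτ]
  obtain ⟨σ, -, hσ⟩ := Finset.exists_ne_zero_of_sum_ne_zero
    ((key Finset.univ).trans_ne one_ne_zero)
  obtain ⟨himg, hne⟩ := mul_ne_zero_iff.1 hσ
  obtain ⟨-, hind, hcard⟩ := (hc Finset.univ).1 σ hne
  exact ⟨σ, hind, hcard, by simpa using himg⟩

/-- The deficiency version of the Aharoni–Haxell theorem for independent transversals. -/
theorem exists_partial_rainbow (hrefl : ∀ x, R x x) (hsymm : ∀ x y, R x y → R y x)
    {A : Type*} [Fintype A] [DecidableEq A] (color : V → A) (d : ℕ)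
    (h : ∀ B : Finset A, B.Nonempty → ∃ I : Finset V, (∀ x ∈ I, color x ∈ B) ∧ Indep R I ∧
      ∀ D : Finset V, Dominates R D I → B.card ≤ D.card + d) :
    ∃ S : Finset V, Indep R S ∧ Set.InjOn color S ∧ Fintype.card A ≤ S.card + d := by
  let color' : V ⊕ (A × Fin d) → A := Sum.elim color Prod.fst
  let R' : V ⊕ (A × Fin d) → V ⊕ (A × Fin d) → Prop :=
    Sum.LiftRel R fun p q => p.2 = q.2
  have hrefl' : ∀ x, R' x x := by
    rintro (x | x)
    · exact .inl (hrefl x)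
    · exact .inr rfl
  have hsymm' : ∀ x y, R' x y → R' y x := by
    rintro _ _ (hxy | hxy)
    · exact .inl (hsymm _ _ hxy)
    · exact .inr hxy.symm
  obtain ⟨S, hS, hcard, himg⟩ := exists_rainbow_of_acyclic (R := R') color' (by
    intro B
    obtain rfl | ⟨a, ha⟩ := B.eq_empty_or_nonempty
    · intro j hj
      simp at hj
    obtain ⟨I, hIB, hI, hD⟩ := h B ⟨a, ha⟩
    refine acyclic_of_dominates hrefl' hsymm' _ (I.disjSum ({a} ×ˢ Finset.univ)) _ ?_ ?_ ?_
    · rintro (x | ⟨b, i⟩) hx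
      · simpa [color'] using hIB x (by simpa using hx)
      · obtain rfl : a = b := by simpa using hx
        simpa [color'] using ha
    · rintro _ hx _ hy (hxy | hxy)
      · rw [hI _ (by simpa using hx) _ (by simpa using hy) hxy]
      · simp only [Finset.inr_mem_disjSum, Finset.mem_product, Finset.mem_singleton] at hx hy
        rw [Prod.ext (hx.1.trans hy.1.symm) hxy]
    · intro D _ hdom
      have hleft : Dominates R D.toLeft I := by
        intro x hx
        obtain ⟨_, hy, hxy⟩ := hdom (.inl x) (by simpa using hx)
        obtain hxy | _ := hxy
        exact ⟨_, by simpa using hy, hxy⟩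
      have hright : D.toRight.image Prod.snd = Finset.univ := by
        refine Finset.eq_univ_of_forall fun i => ?_
        obtain ⟨_, hy, hxy⟩ := hdom (.inr (a, i)) (by simp)
        cases hxy with
        | @inr _ q hxy => exact Finset.mem_image.2 ⟨q, by simpa using hy, hxy.symm⟩
      have hd : d ≤ D.toRight.card := by
        simpa [hright] using Finset.card_image_le (s := D.toRight) (f := Prod.snd)
      have := hD _ hleft
      rw [← Finset.card_toLeft_add_card_toRight]
      omega)
  have hinj : Set.InjOn color' S := by
    rw [← Finset.card_image_iff, himg, hcard, Finset.card_univ]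
  refine ⟨S.toLeft, ?_, ?_, ?_⟩
  · intro x hx y hy hxy
    exact Sum.inl_injective
      (hS _ (Finset.mem_toLeft.1 hx) _ (Finset.mem_toLeft.1 hy) (.inl hxy))
  · intro x hx y hy hxy
    exact Sum.inl_injective
      (hinj (Finset.mem_toLeft.1 hx) (Finset.mem_toLeft.1 hy) hxy)
  · have hd : S.toRight.card ≤ d := by
      rw [← Finset.card_image_of_injOn (f := Prod.snd)]
      · simpa using Finset.card_le_univ (S.toRight.image Prod.snd)
      · intro x hx y hy hxy
        exact Sum.inr_injective
          (hS _ (Finset.mem_toRight.1 hx) _ (Finset.mem_toRight.1 hy) (.inr hxy))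
    have := Finset.card_toLeft_add_card_toRight (u := S)
    omega

end Chains

section Konig

open Classical in
lemma exists_injective_of_min_cover {β γ : Type*} [Fintype γ] {P : β → γ → Prop}
    {S : Finset β} {T : Finset γ} (hcov : ∀ b c, P b c → b ∈ S ∨ c ∈ T)
    (hmin : ∀ (S' : Finset β) (T' : Finset γ), (∀ b c, P b c → b ∈ S' ∨ c ∈ T') →
      S.card + T.card ≤ S'.card + T'.card) :
    ∃ f : S → γ, Function.Injective f ∧ ∀ b : S, f b ∉ T ∧ P b (f b) := by
  let N : S → Finset γ := fun b => Finset.univ.filter fun c => c ∉ T ∧ P b c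
  obtain ⟨f, hf, hfN⟩ := (Finset.all_card_le_biUnion_card_iff_exists_injective N).1 (by
    intro U
    have h := hmin (S \ U.map (Function.Embedding.subtype _)) (T ∪ U.biUnion N) (by
      intro b c hbc
      by_cases hc : c ∈ T
      · exact .inr (Finset.mem_union_left _ hc)
      have hb := (hcov b c hbc).resolve_right hc
      by_cases hbU : (⟨b, hb⟩ : S) ∈ U
      · refine .inr (Finset.mem_union_right _ (Finset.mem_biUnion.2 ⟨_, hbU, ?_⟩))
        simp [N, hc, hbc]
      · refine .inl (Finset.mem_sdiff.2 ⟨hb, ?_⟩)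
        simp [hb, hbU])
    have hsub : U.map (Function.Embedding.subtype _) ⊆ S := by
      intro b hb
      obtain ⟨x, -, rfl⟩ := Finset.mem_map.1 hb
      exact x.2
    have h1 := Finset.card_sdiff_add_card_eq_card hsub
    have h2 := Finset.card_union_le T (U.biUnion N)
    rw [Finset.card_map] at h1
    omega)
  exact ⟨f, hf, fun b => (Finset.mem_filter.1 (hfN b)).2⟩

/-- König's theorem: a bipartite graph has a vertex cover and a matching of the same size. -/
theorem exists_cover_card_le_matching {β γ : Type*} [Fintype β] [Fintype γ] [DecidableEq β]
    [DecidableEq γ] (P : β → γ → Prop) :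
    ∃ (S : Finset β) (T : Finset γ) (M : Finset (β × γ)), (∀ b c, P b c → b ∈ S ∨ c ∈ T) ∧
      (∀ e ∈ M, P e.1 e.2) ∧ (∀ e ∈ M, ∀ f ∈ M, e.1 = f.1 ∨ e.2 = f.2 → e = f) ∧
      S.card + T.card = M.card := by
  obtain ⟨⟨S, T⟩, hcov, hmin⟩ := (Set.toFinite {p : Finset β × Finset γ |
    ∀ b c, P b c → b ∈ p.1 ∨ c ∈ p.2}).exists_minimalFor (fun p => p.1.card + p.2.card) _
      ⟨(Finset.univ, Finset.univ), by simp⟩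
  replace hmin : ∀ (S' : Finset β) (T' : Finset γ), (∀ b c, P b c → b ∈ S' ∨ c ∈ T') →
      S.card + T.card ≤ S'.card + T'.card := by
    intro S' T' h
    exact (le_total _ _).elim id fun h' => hmin (j := (S', T')) h h'
  obtain ⟨f, hf, hfP⟩ := exists_injective_of_min_cover hcov hmin
  obtain ⟨g, hg, hgP⟩ := exists_injective_of_min_cover (P := fun c b => P b c) (S := T) (T := S)
    (fun c b h => (hcov b c h).symm) (fun T' S' h => by
      have := hmin S' T' fun b c hbc => (h c b hbc).symm
      omega)
  let edge : S ⊕ T → β × γ := Sum.elim (fun b => (b, f b)) fun c => (g c, c)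
  have hedge : ∀ x y, (edge x).1 = (edge y).1 ∨ (edge x).2 = (edge y).2 → x = y := by
    rintro (b | c) (b' | c') (h | h)
    · exact congrArg Sum.inl (Subtype.ext h)
    · exact congrArg Sum.inl (hf h)
    · exact ((hgP c').1 ((show (b : β) = g c' from h) ▸ b.2)).elim
    · exact ((hfP b).1 ((show f b = (c' : γ) from h) ▸ c'.2)).elim
    · exact ((hgP c).1 ((show g c = (b' : β) from h) ▸ b'.2)).elim
    · exact ((hfP b').1 ((show (c : γ) = f b' from h) ▸ c.2)).elim
    · exact congrArg Sum.inr (hg h)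
    · exact congrArg Sum.inr (Subtype.ext h)
  refine ⟨S, T, Finset.univ.image edge, hcov, ?_, ?_, ?_⟩
  · simp only [Finset.mem_image, Finset.mem_univ, true_and]
    rintro _ ⟨b | c, rfl⟩
    · exact (hfP b).2
    · exact (hgP c).2
  · simp only [Finset.mem_image, Finset.mem_univ, true_and]
    rintro _ ⟨x, rfl⟩ _ ⟨y, rfl⟩ h
    rw [hedge x y h]
  · rw [Finset.card_image_of_injective _ fun x y h => hedge x y (.inl (congrArg Prod.fst h))]
    simp

end Konig

section Aharoni

variable {α β γ : Type*} [DecidableEq α] [DecidableEq β] [DecidableEq γ]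
  {H : Multiset (α × β × γ)}

/-- Two edges of `H` are in conflict if they share a vertex in the second or third class. -/
def Conflict (H : Multiset (α × β × γ)) (e f : {e // e ∈ H.toFinset}) : Prop :=
  e.1.2.1 = f.1.2.1 ∨ e.1.2.2 = f.1.2.2

lemma card_le_two_mul_of_dominates {I D : Finset {e // e ∈ H.toFinset}}
    (hI : Indep (Conflict H) I) (hD : Dominates (Conflict H) D I) : I.card ≤ 2 * D.card := by
  have hsub : I ⊆ D.biUnion fun y =>
      (I.filter fun x => x.1.2.1 = y.1.2.1) ∪ (I.filter fun x => x.1.2.2 = y.1.2.2) := by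
    intro x hx
    obtain ⟨y, hy, hxy⟩ := hD x hx
    simp only [Finset.mem_biUnion, Finset.mem_union, Finset.mem_filter]
    exact ⟨y, hy, hxy.imp (⟨hx, ·⟩) (⟨hx, ·⟩)⟩
  refine (Finset.card_le_card hsub).trans ?_
  rw [mul_comm]
  refine Finset.card_biUnion_le_card_mul _ _ _ fun y _ => (Finset.card_union_le _ _).trans ?_
  refine Nat.add_le_add (Finset.card_le_one.2 ?_) (Finset.card_le_one.2 ?_) <;>
    intro x hx z hz <;> rw [Finset.mem_filter] at hx hz
  · exact hI x hx.1 z hz.1 (.inl (hx.2.trans hz.2.symm))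
  · exact hI x hx.1 z hz.1 (.inr (hx.2.trans hz.2.symm))

variable [Fintype α] [Fintype β] [Fintype γ]

lemma exists_indep_of_cover {t : ℕ}
    (ht : ∀ S₁ S₂ S₃, IsCover H S₁ S₂ S₃ → t ≤ S₁.card + S₂.card + S₃.card) (B : Finset α) :
    ∃ I : Finset {e // e ∈ H.toFinset}, (∀ e ∈ I, e.1.1 ∈ B) ∧ Indep (Conflict H) I ∧
      t ≤ Bᶜ.card + I.card := by
  obtain ⟨S, T, M, hcov, hM, hmatch, hcard⟩ :=
    exists_cover_card_le_matching fun (b : β) (c : γ) => ∃ a ∈ B, (a, b, c) ∈ H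
  choose a haB haH using hM
  let lift : M → {e // e ∈ H.toFinset} := fun e =>
    ⟨(a e e.2, e.1.1, e.1.2), Multiset.mem_toFinset.2 (haH e e.2)⟩
  have hlift : ∀ e f, Conflict H (lift e) (lift f) → e = f := fun e f h =>
    Subtype.ext (hmatch e e.2 f f.2 h)
  refine ⟨Finset.univ.image lift, ?_, ?_, ?_⟩
  · simp only [Finset.mem_image, Finset.mem_univ, true_and]
    rintro _ ⟨e, rfl⟩
    exact haB e e.2
  · simp only [Indep, Finset.mem_image, Finset.mem_univ, true_and]
    rintro _ ⟨e, rfl⟩ _ ⟨f, rfl⟩ h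
    rw [hlift e f h]
  · rw [Finset.card_image_of_injective _ fun e f h => hlift e f (.inl (by rw [h])),
      Finset.card_univ, Fintype.card_coe, ← hcard, ← add_assoc]
    refine ht _ _ _ fun e he => ?_
    by_cases heB : e.1 ∈ B
    · exact .inr (hcov _ _ ⟨e.1, heB, he⟩)
    · exact .inl (Finset.mem_compl.2 heB)

lemma exists_matching_of_cover {t : ℕ}
    (ht : ∀ S₁ S₂ S₃, IsCover H S₁ S₂ S₃ → t ≤ S₁.card + S₂.card + S₃.card) :
    ∃ M : Finset (α × β × γ), IsMatching H M ∧ t ≤ 2 * M.card := by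
  have htn : t ≤ Fintype.card α := by
    simpa using ht Finset.univ ∅ ∅ fun e _ => .inl (Finset.mem_univ _)
  obtain ⟨S, hS, hinj, hcard⟩ := exists_partial_rainbow (R := Conflict H) (fun _ => .inl rfl)
    (fun _ _ h => h.imp Eq.symm Eq.symm) (fun e => e.1.1) (Fintype.card α - (t + 1) / 2) (by
      intro B _
      obtain ⟨I, hIB, hI, hIt⟩ := exists_indep_of_cover ht B
      refine ⟨I, hIB, hI, fun D hD => ?_⟩
      have h2 := card_le_two_mul_of_dominates hI hD
      have h3 := Finset.card_add_card_compl B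
      omega)
  refine ⟨S.map (Function.Embedding.subtype _), ⟨?_, ?_⟩, ?_⟩
  · intro e he
    obtain ⟨x, -, rfl⟩ := Finset.mem_map.1 he
    exact Multiset.mem_toFinset.1 x.2
  · intro e he f hf hne
    obtain ⟨x, hx, rfl⟩ := Finset.mem_map.1 he
    obtain ⟨y, hy, rfl⟩ := Finset.mem_map.1 hf
    have hxy : x ≠ y := fun h => hne (by rw [h])
    exact ⟨fun h => hxy (hinj hx hy h), fun h => hxy (hS x hx y hy (.inl h)),
      fun h => hxy (hS x hx y hy (.inr h))⟩
  · rw [Finset.card_map]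
    omega

end Aharoni

/-- Aharoni's Theorem: for every 3-partite 3-graph `H`, τ(H) ≤ 2ν(H). -/
theorem stmt1 {α β γ : Type*} [Fintype α] [Fintype β] [Fintype γ]
    [DecidableEq α] [DecidableEq β] [DecidableEq γ]
    (H : Multiset (α × β × γ)) :
    coverNum H ≤ 2 * matchNum H := by
  obtain ⟨M, hM, hcard⟩ := exists_matching_of_cover (H := H) (t := coverNum H)
    fun S₁ S₂ S₃ h => Nat.sInf_le ⟨S₁, S₂, S₃, h, rfl⟩
  have hbdd : BddAbove {k | ∃ M : Finset (α × β × γ), IsMatching H M ∧ M.card = k} := by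
    refine ⟨Fintype.card (α × β × γ), ?_⟩
    rintro _ ⟨M, -, rfl⟩
    exact Finset.card_le_univ M
  have : M.card ≤ matchNum H := le_csSup hbdd ⟨M, hM, rfl⟩
  omega

end Tripartite
end

section
/- Let r ≥ 2 and let H be an r-regular 3-partite 3-graph with n vertices in each vertex class, and let ε ≥ 0. If ν(H) ≤ (1 + ε)·n/2, then H has at least (1 − (22r − 77/3)ε)·n/2 connected components that are copies of (r/2)·F, where F is the truncated Fano plane. -/
namespace Tripartite

/-- The edge multiset of the truncated Fano plane `F` on vertices `x1, y1` (first class),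
`x2, y2` (second class), `x3, y3` (third class). -/
def fanoEdges {α β γ : Type*} (x1 y1 : α) (x2 y2 : β) (x3 y3 : γ) :
    Multiset (α × β × γ) :=
  {(x1, x2, x3), (x1, y2, y3), (y1, x2, y3), (y1, y2, x3)}

/-- The six vertices `x1, y1, x2, y2, x3, y3` span a copy of `s • F` in `H`, i.e. a
subhypergraph in which every edge of the truncated Fano plane appears with
multiplicity (at least) `s`. -/
def IsFanoCopy {α β γ : Type*} (H : Multiset (α × β × γ)) (s : ℕ)
    (x1 y1 : α) (x2 y2 : β) (x3 y3 : γ) : Prop :=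
  x1 ≠ y1 ∧ x2 ≠ y2 ∧ x3 ≠ y3 ∧ s • fanoEdges x1 y1 x2 y2 x3 y3 ≤ H

/-- The six vertices `x1, y1, x2, y2, x3, y3` span a connected component of `H` that is a
copy of `s • F`: the multiset of edges of `H` meeting one of these six vertices is exactly
`s` parallel copies of each of the four edges of the truncated Fano plane. -/
def IsFanoComponent {α β γ : Type*} [DecidableEq α] [DecidableEq β] [DecidableEq γ]
    (H : Multiset (α × β × γ)) (s : ℕ)
    (x1 y1 : α) (x2 y2 : β) (x3 y3 : γ) : Prop :=
  x1 ≠ y1 ∧ x2 ≠ y2 ∧ x3 ≠ y3 ∧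
  H.filter (fun e => e.1 = x1 ∨ e.1 = y1 ∨ e.2.1 = x2 ∨ e.2.1 = y2 ∨
      e.2.2 = x3 ∨ e.2.2 = y3)
    = s • fanoEdges x1 y1 x2 y2 x3 y3

section Helpers

variable {α β γ : Type*}

/-- Two triples are disjoint as edges. -/
def EdgeDisjoint (e f : α × β × γ) : Prop :=
  e.1 ≠ f.1 ∧ e.2.1 ≠ f.2.1 ∧ e.2.2 ≠ f.2.2

/-- The edge `e` meets the matching `M` exactly in the first vertex of `A`. -/
def Pendant1 (M : Finset (α × β × γ)) (A e : α × β × γ) : Prop :=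
  e.1 = A.1 ∧ (∀ B ∈ M, e.2.1 ≠ B.2.1) ∧ ∀ B ∈ M, e.2.2 ≠ B.2.2

/-- The edge `e` meets the matching `M` exactly in the second vertex of `A`. -/
def Pendant2 (M : Finset (α × β × γ)) (A e : α × β × γ) : Prop :=
  e.2.1 = A.2.1 ∧ (∀ B ∈ M, e.1 ≠ B.1) ∧ ∀ B ∈ M, e.2.2 ≠ B.2.2

/-- The edge `e` meets the matching `M` exactly in the third vertex of `A`. -/
def Pendant3 (M : Finset (α × β × γ)) (A e : α × β × γ) : Prop :=
  e.2.2 = A.2.2 ∧ (∀ B ∈ M, e.1 ≠ B.1) ∧ ∀ B ∈ M, e.2.1 ≠ B.2.1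

theorem IsMatching.insert [DecidableEq α] [DecidableEq β] [DecidableEq γ]
    {H : Multiset (α × β × γ)} {N : Finset (α × β × γ)} (hN : IsMatching H N)
    {f : α × β × γ} (hf : f ∈ H) (hd : ∀ B ∈ N, EdgeDisjoint f B) :
    IsMatching H (insert f N) := by
  refine ⟨fun e he => ?_, fun e he g hg hne => ?_⟩
  · rcases Finset.mem_insert.1 he with rfl | he
    exacts [hf, hN.1 e he]
  · rcases Finset.mem_insert.1 he with rfl | he' <;> rcases Finset.mem_insert.1 hg with rfl | hg'
    · exact absurd rfl hne
    · exact hd g hg'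
    · obtain ⟨h1, h2, h3⟩ := hd e he'
      exact ⟨h1.symm, h2.symm, h3.symm⟩
    · exact hN.2 e he' g hg' hne

theorem IsMatching.erase [DecidableEq α] [DecidableEq β] [DecidableEq γ]
    {H : Multiset (α × β × γ)} {N : Finset (α × β × γ)} (hN : IsMatching H N)
    (A : α × β × γ) : IsMatching H (N.erase A) :=
  ⟨fun e he => hN.1 e (Finset.mem_of_mem_erase he), fun e he f hf =>
    hN.2 e (Finset.mem_of_mem_erase he) f (Finset.mem_of_mem_erase hf)⟩

section Pendant

variable {H : Multiset (α × β × γ)} {M : Finset (α × β × γ)} {A e : α × β × γ}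

theorem Pendant1.edgeDisjoint (hM : IsMatching H M) (hA : A ∈ M) (he : Pendant1 M A e) :
    ∀ B ∈ M, B ≠ A → EdgeDisjoint e B := fun B hB hBA =>
  ⟨he.1 ▸ (hM.2 A hA B hB hBA.symm).1, he.2.1 B hB, he.2.2 B hB⟩

theorem Pendant2.edgeDisjoint (hM : IsMatching H M) (hA : A ∈ M) (he : Pendant2 M A e) :
    ∀ B ∈ M, B ≠ A → EdgeDisjoint e B := fun B hB hBA =>
  ⟨he.2.1 B hB, he.1 ▸ (hM.2 A hA B hB hBA.symm).2.1, he.2.2 B hB⟩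

theorem Pendant3.edgeDisjoint (hM : IsMatching H M) (hA : A ∈ M) (he : Pendant3 M A e) :
    ∀ B ∈ M, B ≠ A → EdgeDisjoint e B := fun B hB hBA =>
  ⟨he.2.1 B hB, he.2.2 B hB, he.1 ▸ (hM.2 A hA B hB hBA.symm).2.2⟩

end Pendant

variable [DecidableEq α] [DecidableEq β] [DecidableEq γ]

/-- In a maximum matching an edge cannot be exchanged for two disjoint edges. -/
theorem not_edgeDisjoint_of_maximum {H : Multiset (α × β × γ)} {M : Finset (α × β × γ)}
    (hM : IsMatching H M) (hmax : ∀ N, IsMatching H N → N.card ≤ M.card)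
    {A f g : α × β × γ} (hA : A ∈ M) (hf : f ∈ H) (hg : g ∈ H)
    (hfd : ∀ B ∈ M, B ≠ A → EdgeDisjoint f B) (hgd : ∀ B ∈ M, B ≠ A → EdgeDisjoint g B) :
    ¬ EdgeDisjoint f g := by
  intro hfg
  have hgd' : ∀ B ∈ M.erase A, EdgeDisjoint g B := fun B hB =>
    hgd B (Finset.mem_of_mem_erase hB) (Finset.ne_of_mem_erase hB)
  have hfd' : ∀ B ∈ insert g (M.erase A), EdgeDisjoint f B := fun B hB => by
    rcases Finset.mem_insert.1 hB with rfl | hB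
    exacts [hfg, hfd B (Finset.mem_of_mem_erase hB) (Finset.ne_of_mem_erase hB)]
  have h := hmax _ (((hM.erase A).insert hg hgd').insert hf hfd')
  rw [Finset.card_insert_of_notMem fun h => (hfd' f h).1 rfl,
    Finset.card_insert_of_notMem fun h => (hgd' g h).1 rfl] at h
  have := Finset.card_erase_add_one hA
  omega

/-- In a maximum matching of largest total multiplicity, exchanging an edge does not increase
its multiplicity. -/
theorem count_le_of_exchange {H : Multiset (α × β × γ)} {M : Finset (α × β × γ)}
    (hM : IsMatching H M)
    (hopt : ∀ N, IsMatching H N → N.card = M.card →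
      ∑ e ∈ N, H.count e ≤ ∑ e ∈ M, H.count e)
    {A f : α × β × γ} (hA : A ∈ M) (hf : f ∈ H)
    (hfd : ∀ B ∈ M, B ≠ A → EdgeDisjoint f B) : H.count f ≤ H.count A := by
  have hfd' : ∀ B ∈ M.erase A, EdgeDisjoint f B := fun B hB =>
    hfd B (Finset.mem_of_mem_erase hB) (Finset.ne_of_mem_erase hB)
  have hnot : f ∉ M.erase A := fun h => (hfd' f h).1 rfl
  have h := hopt _ ((hM.erase A).insert hf hfd')
    (by rw [Finset.card_insert_of_notMem hnot, Finset.card_erase_add_one hA])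
  rw [Finset.sum_insert hnot, ← Finset.add_sum_erase M _ hA] at h
  omega

/-- Some maximum matching has the largest total multiplicity among all maximum matchings. -/
theorem exists_optimal_matching [Fintype α] [Fintype β] [Fintype γ]
    (H : Multiset (α × β × γ)) :
    ∃ M, IsMatching H M ∧ M.card = matchNum H ∧
      (∀ N, IsMatching H N → N.card ≤ M.card) ∧
      ∀ N, IsMatching H N → N.card = M.card →
        ∑ e ∈ N, H.count e ≤ ∑ e ∈ M, H.count e := by
  classical
  have hbdd : BddAbove {k | ∃ M : Finset (α × β × γ), IsMatching H M ∧ M.card = k} :=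
    ⟨Fintype.card (α × β × γ), by rintro _ ⟨M, -, rfl⟩; exact Finset.card_le_univ M⟩
  have hne : {k | ∃ M : Finset (α × β × γ), IsMatching H M ∧ M.card = k}.Nonempty :=
    ⟨0, ∅, ⟨by simp, by simp⟩, rfl⟩
  obtain ⟨M₀, hM₀, hcard₀⟩ := Nat.sSup_mem hne hbdd
  obtain ⟨M, hM, hopt⟩ := Finset.exists_max_image
    (Finset.univ.filter fun N => IsMatching H N ∧ N.card = matchNum H)
    (fun N => ∑ e ∈ N, H.count e) ⟨M₀, by simpa using ⟨hM₀, hcard₀⟩⟩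
  simp only [Finset.mem_filter, Finset.mem_univ, true_and] at hM hopt
  exact ⟨M, hM.1, hM.2, fun N hN => hM.2 ▸ le_csSup hbdd ⟨N, hN, rfl⟩,
    fun N hN hc => hopt N ⟨hN, hc.trans hM.2⟩⟩

/-- `u` completes the matching edge `A` to a component that is a copy of `(r / 2) • F`, all
vertices of `u` being uncovered by `M`. -/
def CompletesFano (H : Multiset (α × β × γ)) (M : Finset (α × β × γ)) (r : ℕ)
    (A u : α × β × γ) : Prop :=
  (∀ B ∈ M, EdgeDisjoint u B) ∧ (u.1, A.2.1, u.2.2) ∈ H ∧ (A.1, u.2.1, u.2.2) ∈ H ∧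
    (u.1, u.2.1, A.2.2) ∈ H ∧
    ∃ s, 2 * s = r ∧ IsFanoComponent H s A.1 u.1 A.2.1 u.2.1 A.2.2 u.2.2

/-- Distinct matching edges are completed to vertex-disjoint Fano components. -/
theorem CompletesFano.edgeDisjoint {H : Multiset (α × β × γ)} {M : Finset (α × β × γ)}
    {r : ℕ} (hM : IsMatching H M) {A B u v : α × β × γ} (hA : A ∈ M) (hB : B ∈ M) (hAB : A ≠ B)
    (hu : CompletesFano H M r A u) (hv : CompletesFano H M r B v) : EdgeDisjoint u v := by
  obtain ⟨hu, -, -, -, s, -, -, -, -, hF⟩ := hu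
  obtain ⟨hv, hv2, hv1, -, -⟩ := hv
  have hd := hM.2 A hA B hB hAB
  have key : ∀ e ∈ H, (e.1 = A.1 ∨ e.1 = u.1 ∨ e.2.1 = A.2.1 ∨ e.2.1 = u.2.1 ∨
      e.2.2 = A.2.2 ∨ e.2.2 = u.2.2) →
      (e.1 = A.1 ∨ e.1 = u.1) ∧ (e.2.1 = A.2.1 ∨ e.2.1 = u.2.1) := by
    intro e he hc
    have h : e ∈ s • fanoEdges A.1 u.1 A.2.1 u.2.1 A.2.2 u.2.2 :=
      hF ▸ Multiset.mem_filter.2 ⟨he, hc⟩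
    have h' := Multiset.mem_of_mem_nsmul h
    simp only [fanoEdges, Multiset.insert_eq_cons, Multiset.mem_cons,
      Multiset.mem_singleton] at h'
    rcases h' with rfl | rfl | rfl | rfl <;> simp
  have hB1 := (hu B hB).1
  have hB2 := (hu B hB).2.1
  refine ⟨fun h => ?_, fun h => ?_, fun h => ?_⟩
  · have := (key _ hv2 (by simp [h])).2
    exact this.elim hd.2.1.symm hB2.symm
  · have := (key _ hv1 (by simp [h])).1
    exact this.elim hd.1.symm hB1.symm
  · have := (key _ hv2 (by simp [h])).2
    exact this.elim hd.2.1.symm hB2.symm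

theorem pair_inter_pair_eq_empty {δ : Type*} [DecidableEq δ] {a b c d : δ} (hac : a ≠ c)
    (had : a ≠ d) (hbc : b ≠ c) (hbd : b ≠ d) : ({a, b} : Finset δ) ∩ {c, d} = ∅ := by
  simp [hac, had, hbc, hbd]

section Counting

variable [Fintype α] [Fintype β] [Fintype γ] {H : Multiset (α × β × γ)}

theorem card_filter_eq_sum_count {δ : Type*} [Fintype δ] [DecidableEq δ] (S : Multiset δ)
    (P : δ → Prop) [DecidablePred P] :
    (S.filter P).card = ∑ e with P e, S.count e := by
  rw [← Multiset.sum_count_eq_card (s := Finset.univ.filter P) (by simp)]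
  exact Finset.sum_congr rfl fun e he =>
    Multiset.count_filter_of_pos (Finset.mem_filter.1 he).2

theorem IsRegular.sum_eq {r : ℕ} (h : IsRegular H r) :
    (∀ a, ∑ e with e.1 = a, H.count e = r) ∧ (∀ b, ∑ e with e.2.1 = b, H.count e = r) ∧
      ∀ c, ∑ e with e.2.2 = c, H.count e = r :=
  ⟨fun a => (card_filter_eq_sum_count H _).symm.trans (h.1 a),
    fun b => (card_filter_eq_sum_count H _).symm.trans (h.2.1 b),
    fun c => (card_filter_eq_sum_count H _).symm.trans (h.2.2 c)⟩

theorem sum_count_le_sum_filter {r : ℕ} {P : α × β × γ → Prop} [DecidablePred P]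
    (hP : ∑ e with P e, H.count e = r) {S : Finset (α × β × γ)}
    (hS : ∀ e ∈ S, e ∈ H → P e) : ∑ e ∈ S, H.count e ≤ r := by
  rw [← hP]
  refine Finset.sum_le_sum_of_ne_zero fun e he hne => ?_
  simpa using hS e he (Multiset.count_ne_zero.1 hne)

theorem count_add_count_le {r : ℕ} {P : α × β × γ → Prop} [DecidablePred P]
    (hP : ∑ e with P e, H.count e = r) {e f : α × β × γ} (hne : e ≠ f) (he : P e) (hf : P f) :
    H.count e + H.count f ≤ r := by
  rw [← Finset.sum_pair (f := fun e => H.count e) hne]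
  exact sum_count_le_sum_filter hP (by simp [he, hf])

/-- If two edges exhaust the degree of a vertex, there is no third edge at that vertex. -/
theorem eq_or_eq_of_count_add_count {r : ℕ} {P : α × β × γ → Prop} [DecidablePred P]
    (hP : ∑ e with P e, H.count e = r) {e f g : α × β × γ} (hne : e ≠ f) (he : P e) (hf : P f)
    (hr : H.count e + H.count f = r) (hg : g ∈ H) (hPg : P g) : g = e ∨ g = f := by
  by_contra! hc
  have h := sum_count_le_sum_filter (S := {g, e, f}) hP (by simp [he, hf, hPg])
  rw [Finset.sum_insert (by simp [hc.1, hc.2]), Finset.sum_pair hne] at h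
  have := Multiset.count_pos.2 hg
  omega

/-- Two classes of edges, all containing a common vertex of degree `r`. -/
theorem sum_filter_add_sum_filter_le {r : ℕ} {P Q R : α × β × γ → Prop} [DecidablePred P]
    [DecidablePred Q] [DecidablePred R] (hR : ∑ e with R e, H.count e = r)
    (hPR : ∀ e ∈ H, P e → R e) (hQR : ∀ e ∈ H, Q e → R e) (hPQ : ∀ e, P e → ¬ Q e) :
    ∑ e with P e, H.count e + ∑ e with Q e, H.count e ≤ r := by
  rw [← Finset.sum_union (Finset.disjoint_filter.2 fun e _ => hPQ e)]
  refine sum_count_le_sum_filter hR fun e he heH => ?_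
  simp only [Finset.mem_union, Finset.mem_filter, Finset.mem_univ, true_and] at he
  exact he.elim (hPR e heH) (hQR e heH)

theorem sum_filter_le_count {P : α × β × γ → Prop} [DecidablePred P] {f : α × β × γ}
    (hf : ∀ e ∈ H, P e → e = f) : ∑ e with P e, H.count e ≤ H.count f := by
  rw [← Finset.sum_singleton (fun e => H.count e) f]
  refine Finset.sum_le_sum_of_ne_zero fun e he hne => ?_
  simpa using hf e (Multiset.count_ne_zero.1 hne) (Finset.mem_filter.1 he).2

theorem sum_filter_eq_zero {P : α × β × γ → Prop} [DecidablePred P]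
    (hP : ∀ e ∈ H, ¬ P e) : ∑ e with P e, H.count e = 0 :=
  Finset.sum_eq_zero fun e he =>
    Multiset.count_eq_zero.2 fun h => hP e h (Finset.mem_filter.1 he).2

/-- Four edges of a truncated Fano plane of equal multiplicity `s` span a component of a
`2 * s`-regular hypergraph. -/
theorem isFanoComponent_of_count_eq {s : ℕ} (hreg : IsRegular H (2 * s)) {x1 y1 : α} {x2 y2 : β}
    {x3 y3 : γ} (h1 : x1 ≠ y1) (h2 : x2 ≠ y2) (h3 : x3 ≠ y3)
    (hx : H.count (x1, x2, x3) = s) (hy1 : H.count (x1, y2, y3) = s)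
    (hy2 : H.count (y1, x2, y3) = s) (hy3 : H.count (y1, y2, x3) = s) :
    IsFanoComponent H s x1 y1 x2 y2 x3 y3 := by
  obtain ⟨d1, d2, d3⟩ := hreg.sum_eq
  refine ⟨h1, h2, h3, ?_⟩
  have key : ∀ e ∈ H, (e.1 = x1 ∨ e.1 = y1 ∨ e.2.1 = x2 ∨ e.2.1 = y2 ∨ e.2.2 = x3 ∨ e.2.2 = y3) →
      e = (x1, x2, x3) ∨ e = (x1, y2, y3) ∨ e = (y1, x2, y3) ∨ e = (y1, y2, x3) := by
    intro e he hc
    rcases hc with hc | hc | hc | hc | hc | hc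
    · have := eq_or_eq_of_count_add_count (d1 x1) (e := (x1, x2, x3)) (f := (x1, y2, y3))
        (by simp [h2]) rfl rfl (by omega) he hc
      tauto
    · have := eq_or_eq_of_count_add_count (d1 y1) (e := (y1, x2, y3)) (f := (y1, y2, x3))
        (by simp [h2]) rfl rfl (by omega) he hc
      tauto
    · have := eq_or_eq_of_count_add_count (d2 x2) (e := (x1, x2, x3)) (f := (y1, x2, y3))
        (by simp [h1]) rfl rfl (by omega) he hc
      tauto
    · have := eq_or_eq_of_count_add_count (d2 y2) (e := (x1, y2, y3)) (f := (y1, y2, x3))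
        (by simp [h1]) rfl rfl (by omega) he hc
      tauto
    · have := eq_or_eq_of_count_add_count (d3 x3) (e := (x1, x2, x3)) (f := (y1, y2, x3))
        (by simp [h1]) rfl rfl (by omega) he hc
      tauto
    · have := eq_or_eq_of_count_add_count (d3 y3) (e := (x1, y2, y3)) (f := (y1, x2, y3))
        (by simp [h1]) rfl rfl (by omega) he hc
      tauto
  ext e
  rw [Multiset.count_nsmul, fanoEdges]
  by_cases hF : e = (x1, x2, x3) ∨ e = (x1, y2, y3) ∨ e = (y1, x2, y3) ∨ e = (y1, y2, x3)
  · rcases hF with rfl | rfl | rfl | rfl <;>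
      simp [Multiset.insert_eq_cons, hx, hy1, hy2, hy3, h1, h2, h3, h1.symm, h2.symm, h3.symm]
  · rw [Multiset.count_eq_zero.2, Multiset.count_eq_zero.2, mul_zero]
    · simpa [Multiset.insert_eq_cons] using hF
    · exact fun h => hF (key e (Multiset.mem_filter.1 h).1 (Multiset.mem_filter.1 h).2)

open Classical in
/-- Number of edges meeting the matching `M` in exactly one vertex, which lies in `A`. -/
noncomputable def pendantCount (H : Multiset (α × β × γ)) (M : Finset (α × β × γ))
    (A : α × β × γ) : ℕ :=
  ∑ e with Pendant1 M A e, H.count e + ∑ e with Pendant2 M A e, H.count e +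
    ∑ e with Pendant3 M A e, H.count e

theorem pendantCount_le_or_completesFano {M : Finset (α × β × γ)} {r : ℕ}
    (hreg : IsRegular H r) (hM : IsMatching H M)
    (hmax : ∀ N, IsMatching H N → N.card ≤ M.card)
    (hopt : ∀ N, IsMatching H N → N.card = M.card →
      ∑ e ∈ N, H.count e ≤ ∑ e ∈ M, H.count e)
    {A : α × β × γ} (hA : A ∈ M) :
    2 * pendantCount H M A + 1 ≤ 2 * H.count A + 2 * r ∨
      2 * pendantCount H M A ≤ 2 * H.count A + 2 * r ∧ ∃ u, CompletesFano H M r A u := by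
  classical
  obtain ⟨d1, d2, d3⟩ := hreg.sum_eq
  have hpos := Multiset.count_pos.2 (hM.1 A hA)
  have h12 : ∀ f ∈ H, ∀ g ∈ H, Pendant1 M A f → Pendant2 M A g → f.2.2 = g.2.2 := by
    intro f hf g hg pf pg
    by_contra hne
    exact not_edgeDisjoint_of_maximum hM hmax hA hf hg (pf.edgeDisjoint hM hA)
      (pg.edgeDisjoint hM hA)
      ⟨pf.1 ▸ (pg.2.1 A hA).symm, pg.1 ▸ pf.2.1 A hA, hne⟩
  have h13 : ∀ f ∈ H, ∀ g ∈ H, Pendant1 M A f → Pendant3 M A g → f.2.1 = g.2.1 := by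
    intro f hf g hg pf pg
    by_contra hne
    exact not_edgeDisjoint_of_maximum hM hmax hA hf hg (pf.edgeDisjoint hM hA)
      (pg.edgeDisjoint hM hA)
      ⟨pf.1 ▸ (pg.2.1 A hA).symm, hne, pg.1 ▸ pf.2.2 A hA⟩
  have h23 : ∀ f ∈ H, ∀ g ∈ H, Pendant2 M A f → Pendant3 M A g → f.1 = g.1 := by
    intro f hf g hg pf pg
    by_contra hne
    exact not_edgeDisjoint_of_maximum hM hmax hA hf hg (pf.edgeDisjoint hM hA)
      (pg.edgeDisjoint hM hA)
      ⟨hne, pf.1 ▸ (pg.2.2 A hA).symm, pg.1 ▸ pf.2.2 A hA⟩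
  have n12 : ∀ e, Pendant1 M A e → ¬ Pendant2 M A e := fun e p q => p.2.1 A hA q.1
  have n13 : ∀ e, Pendant1 M A e → ¬ Pendant3 M A e := fun e p q => p.2.2 A hA q.1
  have n23 : ∀ e, Pendant2 M A e → ¬ Pendant3 M A e := fun e p q => p.2.2 A hA q.1
  unfold pendantCount
  by_cases e1 : ∃ f ∈ H, Pendant1 M A f
  swap
  · push Not at e1
    rw [sum_filter_eq_zero e1]
    by_cases e2 : ∃ g ∈ H, Pendant2 M A g
    · obtain ⟨g, hg, pg⟩ := e2
      by_cases e3 : ∃ h ∈ H, Pendant3 M A h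
      · obtain ⟨h, hh, ph⟩ := e3
        have := sum_filter_add_sum_filter_le (d1 h.1)
          (fun e he pe => h23 e he h hh pe ph)
          (fun e he pe => (h23 g hg e he pg pe).symm.trans (h23 g hg h hh pg ph)) n23
        omega
      · push Not at e3
        have := sum_filter_add_sum_filter_le (d2 A.2.1) (fun e _ pe => pe.1)
          (fun e he pe => absurd pe (e3 e he)) n23
        omega
    · push Not at e2
      have := sum_filter_add_sum_filter_le (d3 A.2.2)
          (fun e he pe => absurd pe (e2 e he)) (fun e _ pe => pe.1) n23
      omega
  obtain ⟨f, hf, pf⟩ := e1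
  by_cases e2 : ∃ g ∈ H, Pendant2 M A g
  swap
  · push Not at e2
    rw [sum_filter_eq_zero e2]
    by_cases e3 : ∃ h ∈ H, Pendant3 M A h
    · obtain ⟨h, hh, ph⟩ := e3
      have := sum_filter_add_sum_filter_le (d2 h.2.1)
        (fun e he pe => h13 e he h hh pe ph)
        (fun e he pe => (h13 f hf e he pf pe).symm.trans (h13 f hf h hh pf ph)) n13
      omega
    · push Not at e3
      have := sum_filter_add_sum_filter_le (d1 A.1) (fun e _ pe => pe.1)
        (fun e he pe => absurd pe (e3 e he)) n13
      omega
  obtain ⟨g, hg, pg⟩ := e2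
  by_cases e3 : ∃ h ∈ H, Pendant3 M A h
  swap
  · push Not at e3
    rw [sum_filter_eq_zero e3]
    have := sum_filter_add_sum_filter_le (d3 g.2.2)
      (fun e he pe => h12 e he g hg pe pg)
      (fun e he pe => (h12 f hf e he pf pe).symm.trans (h12 f hf g hg pf pg)) n12
    omega
  obtain ⟨h, hh, ph⟩ := e3
  have c1 := sum_filter_le_count (H := H) (P := Pendant1 M A) (f := f) fun e he pe =>
    Prod.ext (pe.1.trans pf.1.symm) (Prod.ext
      ((h13 e he h hh pe ph).trans (h13 f hf h hh pf ph).symm)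
      ((h12 e he g hg pe pg).trans (h12 f hf g hg pf pg).symm))
  have c2 := sum_filter_le_count (H := H) (P := Pendant2 M A) (f := g) fun e he pe =>
    Prod.ext ((h23 e he h hh pe ph).trans (h23 g hg h hh pg ph).symm)
      (Prod.ext (pe.1.trans pg.1.symm)
      ((h12 f hf e he pf pe).symm.trans (h12 f hf g hg pf pg)))
  have c3 := sum_filter_le_count (H := H) (P := Pendant3 M A) (f := h) fun e he pe =>
    Prod.ext ((h23 g hg e he pg pe).symm.trans (h23 g hg h hh pg ph)) (Prod.ext
      ((h13 f hf e he pf pe).symm.trans (h13 f hf h hh pf ph)) (pe.1.trans ph.1.symm))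
  have m1 := count_le_of_exchange hM hopt hA hf (pf.edgeDisjoint hM hA)
  have m2 := count_le_of_exchange hM hopt hA hg (pg.edgeDisjoint hM hA)
  have m3 := count_le_of_exchange hM hopt hA hh (ph.edgeDisjoint hM hA)
  have A1 := count_add_count_le (d1 A.1) (fun h => pf.2.1 A hA (by rw [← h])) rfl pf.1
  have A2 := count_add_count_le (d2 A.2.1) (fun h => pg.2.1 A hA (by rw [← h])) rfl pg.1
  have A3 := count_add_count_le (d3 A.2.2) (fun h => ph.2.1 A hA (by rw [← h])) rfl ph.1
  have u1 := count_add_count_le (d1 g.1) (fun he => n23 g pg (by rwa [he])) rfl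
    (h23 g hg h hh pg ph).symm
  have u2 := count_add_count_le (d2 f.2.1) (fun he => n13 f pf (by rwa [he])) rfl
    (h13 f hf h hh pf ph).symm
  have u3 := count_add_count_le (d3 f.2.2) (fun he => n12 f pf (by rwa [he])) rfl
    (h12 f hf g hg pf pg).symm
  by_cases hT : H.count A + H.count f + H.count g + H.count h = 2 * r
  · refine Or.inr ⟨by omega, ?_⟩
    have hfeq : f = (A.1, f.2.1, g.2.2) := by rw [← h12 f hf g hg pf pg, ← pf.1]
    have hgeq : g = (g.1, A.2.1, g.2.2) := by rw [← pg.1]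
    have hheq : h = (g.1, f.2.1, A.2.2) := by
      rw [h23 g hg h hh pg ph, h13 f hf h hh pf ph, ← ph.1]
    refine ⟨(g.1, f.2.1, g.2.2), fun B hB => ⟨pg.2.1 B hB, pf.2.1 B hB, pg.2.2 B hB⟩,
      hgeq ▸ hg, hfeq ▸ hf, hheq ▸ hh, H.count A, by omega, ?_⟩
    have hr : r = 2 * H.count A := by omega
    refine isFanoComponent_of_count_eq (hr ▸ hreg) (pg.2.1 A hA).symm (pf.2.1 A hA).symm
      (pg.2.2 A hA).symm rfl ?_ ?_ ?_
    · rw [← hfeq]; omega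
    · rw [← hgeq]; omega
    · rw [← hheq]; omega
  · left
    omega

/-- If all fibres of `p` contain `r` edges of `H`, then the pairs of an edge of `H` and an
element of `M` with equal image number `r * M.card`. -/
theorem sum_count_mul_card_filter {δ : Type*} [DecidableEq δ] {M : Finset (α × β × γ)} {r : ℕ}
    (p : α × β × γ → δ) (hp : ∀ d, ∑ e with p e = d, H.count e = r) :
    ∑ e, H.count e * (M.filter fun A => p e = p A).card = r * M.card := by
  simp_rw [Finset.card_filter, Finset.mul_sum]
  rw [Finset.sum_comm]
  simp_rw [mul_ite, mul_one, mul_zero, ← Finset.sum_filter, hp]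
  simp [mul_comm]

theorem sum_count_eq_mul_card {r : ℕ} (hreg : IsRegular H r) :
    ∑ e, H.count e = r * Fintype.card α := by
  rw [← Finset.sum_fiberwise Finset.univ (fun e : α × β × γ => e.1)]
  simp [hreg.sum_eq.1, mul_comm]

/-- Double counting of incidences between edges and vertices of a maximum matching. -/
theorem double_count {M : Finset (α × β × γ)} {r : ℕ} (hreg : IsRegular H r)
    (hM : IsMatching H M) (hmax : ∀ N, IsMatching H N → N.card ≤ M.card) :
    2 * (r * Fintype.card α) + ∑ A ∈ M, H.count A ≤
      3 * (r * M.card) + ∑ A ∈ M, pendantCount H M A := by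
  classical
  obtain ⟨d1, d2, d3⟩ := hreg.sum_eq
  have hpen : ∑ A ∈ M, pendantCount H M A = ∑ e, H.count e *
      ((M.filter fun A => Pendant1 M A e).card + (M.filter fun A => Pendant2 M A e).card +
        (M.filter fun A => Pendant3 M A e).card) := by
    simp_rw [pendantCount, Finset.sum_filter, ← Finset.sum_add_distrib]
    rw [Finset.sum_comm]
    refine Finset.sum_congr rfl fun e _ => ?_
    simp_rw [Finset.card_filter, ← Finset.sum_add_distrib, Finset.mul_sum, mul_add, mul_ite,
      mul_one, mul_zero]
  have hself : ∑ A ∈ M, H.count A = ∑ e, H.count e * (if e ∈ M then 1 else 0) := by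
    simp
  have hthree : 3 * (r * M.card) = ∑ e, H.count e *
      ((M.filter fun A => e.1 = A.1).card + (M.filter fun A => e.2.1 = A.2.1).card +
        (M.filter fun A => e.2.2 = A.2.2).card) := by
    simp_rw [mul_add, Finset.sum_add_distrib]
    rw [sum_count_mul_card_filter (fun e => e.1) d1, sum_count_mul_card_filter (fun e => e.2.1) d2,
      sum_count_mul_card_filter (fun e => e.2.2) d3]
    ring
  rw [hpen, hself, hthree, ← sum_count_eq_mul_card hreg, Finset.mul_sum, ← Finset.sum_add_distrib,
    ← Finset.sum_add_distrib]
  refine Finset.sum_le_sum fun e _ => ?_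
  by_cases he : e ∈ H
  swap
  · simp [Multiset.count_eq_zero.2 he]
  rw [mul_comm 2, ← mul_add, ← mul_add]
  refine Nat.mul_le_mul_left _ ?_
  have hcard : ∀ {P : α × β × γ → Prop} [DecidablePred P] {A}, A ∈ M → P A →
      1 ≤ (M.filter P).card := fun hA hP =>
    Finset.card_pos.2 ⟨_, Finset.mem_filter.2 ⟨hA, hP⟩⟩
  by_cases heM : e ∈ M
  · have i1 := hcard (P := fun A => e.1 = A.1) heM rfl
    have i2 := hcard (P := fun A => e.2.1 = A.2.1) heM rfl
    have i3 := hcard (P := fun A => e.2.2 = A.2.2) heM rfl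
    rw [if_pos heM]
    omega
  rw [if_neg heM]
  have dich : ∀ P : α × β × γ → Prop, (∃ A ∈ M, P A) ∨ ∀ A ∈ M, ¬ P A := fun P =>
    or_iff_not_imp_left.2 fun h A hA hP => h ⟨A, hA, hP⟩
  rcases dich fun A => e.1 = A.1 with ⟨A, hA, a⟩ | c1 <;>
    rcases dich fun A => e.2.1 = A.2.1 with ⟨B, hB, b⟩ | c2
  · have := hcard (P := fun A => e.1 = A.1) hA a
    have := hcard (P := fun A => e.2.1 = A.2.1) hB b
    omega
  · have := hcard (P := fun A => e.1 = A.1) hA a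
    rcases dich fun A => e.2.2 = A.2.2 with ⟨C, hC, c⟩ | c3
    · have := hcard (P := fun A => e.2.2 = A.2.2) hC c
      omega
    · have := hcard (P := fun A => Pendant1 M A e) hA ⟨a, c2, c3⟩
      omega
  · have := hcard (P := fun A => e.2.1 = A.2.1) hB b
    rcases dich fun A => e.2.2 = A.2.2 with ⟨C, hC, c⟩ | c3
    · have := hcard (P := fun A => e.2.2 = A.2.2) hC c
      omega
    · have := hcard (P := fun A => Pendant2 M A e) hB ⟨b, c1, c3⟩
      omega
  · rcases dich fun A => e.2.2 = A.2.2 with ⟨C, hC, c⟩ | c3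
    · have := hcard (P := fun A => e.2.2 = A.2.2) hC c
      have := hcard (P := fun A => Pendant3 M A e) hC ⟨c, c1, c2⟩
      omega
    · have h := hmax _ (hM.insert he fun B hB => ⟨c1 B hB, c2 B hB, c3 B hB⟩)
      rw [Finset.card_insert_of_notMem heM] at h
      omega

end Counting

end Helpers

/-- Stability theorem for regular 3-partite 3-graphs: if `H` is `r`-regular (`r ≥ 2`) with
`n` vertices in each class and `ν(H) ≤ (1 + ε)·n/2`, then `H` has at least
`(1 − (22r − 77/3)ε)·n/2` connected components that are copies of `(r/2) • F`. -/
theorem stmt2 {α β γ : Type*} [Fintype α] [Fintype β] [Fintype γ]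
    [DecidableEq α] [DecidableEq β] [DecidableEq γ]
    (H : Multiset (α × β × γ)) (n r : ℕ) (hr : 2 ≤ r) (ε : ℝ) (hε : 0 ≤ ε)
    (hreg : IsRegular H r)
    (hA : Fintype.card α = n) (hB : Fintype.card β = n) (hC : Fintype.card γ = n)
    (hnu : (matchNum H : ℝ) ≤ (1 + ε) * n / 2) :
    ∃ T : Finset (α × α × β × β × γ × γ),
      (∀ t ∈ T, ∃ s : ℕ, 2 * s = r ∧
        IsFanoComponent H s t.1 t.2.1 t.2.2.1 t.2.2.2.1 t.2.2.2.2.1 t.2.2.2.2.2) ∧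
      (∀ t ∈ T, ∀ t' ∈ T, t ≠ t' →
        ({t.1, t.2.1} : Finset α) ∩ {t'.1, t'.2.1} = ∅ ∧
        ({t.2.2.1, t.2.2.2.1} : Finset β) ∩ {t'.2.2.1, t'.2.2.2.1} = ∅ ∧
        ({t.2.2.2.2.1, t.2.2.2.2.2} : Finset γ) ∩ {t'.2.2.2.2.1, t'.2.2.2.2.2} = ∅) ∧
      (1 - (22 * (r : ℝ) - 77 / 3) * ε) * n / 2 ≤ (T.card : ℝ) := by
  classical
  obtain ⟨M, hM, hcard, hmax, hopt⟩ := exists_optimal_matching H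
  let G := M.filter fun A => ∃ u, CompletesFano H M r A u
  have hG : ∀ A ∈ G, A ∈ M ∧ ∃ u, CompletesFano H M r A u := fun A hA => Finset.mem_filter.1 hA
  choose! u hu using fun A hA => (hG A hA).2
  have hpoint : ∀ A ∈ M, 2 * pendantCount H M A + 1 ≤
      2 * H.count A + 2 * r + if ∃ u, CompletesFano H M r A u then 1 else 0 := by
    intro A hA
    rcases pendantCount_le_or_completesFano hreg hM hmax hopt hA with h | ⟨h, hc⟩
    · omega
    · rw [if_pos hc]
      omega
  have hsum := Finset.sum_le_sum hpoint
  simp only [Finset.sum_add_distrib, ← Finset.mul_sum, Finset.sum_const, smul_eq_mul, mul_one,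
    ← Finset.card_filter] at hsum
  have hdouble := double_count hreg hM hmax
  rw [hA] at hdouble
  have hcount : 4 * (r * n) + M.card ≤ 8 * (r * M.card) + G.card := by
    rw [mul_comm M.card r] at hsum
    change _ ≤ _ + G.card at hsum
    omega
  let φ : α × β × γ → α × α × β × β × γ × γ := fun A =>
    (A.1, (u A).1, A.2.1, (u A).2.1, A.2.2, (u A).2.2)
  have hφ : Function.Injective φ := fun A B h => by
    simp only [φ, Prod.mk.injEq] at h
    exact Prod.ext h.1 (Prod.ext h.2.2.1 h.2.2.2.2.1)
  refine ⟨G.image φ, ?_, ?_, ?_⟩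
  · simp only [Finset.mem_image, forall_exists_index, and_imp]
    rintro _ A hA rfl
    exact (hu A hA).2.2.2.2
  · simp only [Finset.mem_image, forall_exists_index, and_imp]
    rintro _ A hA rfl _ B hB rfl hne
    have hAB : A ≠ B := fun h => hne (h ▸ rfl)
    have hx := hM.2 A (hG A hA).1 B (hG B hB).1 hAB
    have hy := (hu A hA).edgeDisjoint hM (hG A hA).1 (hG B hB).1 hAB (hu B hB)
    have hxy := (hu B hB).1 A (hG A hA).1
    have hyx := (hu A hA).1 B (hG B hB).1
    exact ⟨pair_inter_pair_eq_empty hx.1 hxy.1.symm hyx.1 hy.1,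
      pair_inter_pair_eq_empty hx.2.1 hxy.2.1.symm hyx.2.1 hy.2.1,
      pair_inter_pair_eq_empty hx.2.2 hxy.2.2.symm hyx.2.2 hy.2.2⟩
  · rw [Finset.card_image_of_injective _ hφ]
    rw [← hcard] at hnu
    have hcount' : 4 * ((r : ℝ) * n) + M.card ≤ 8 * (r * M.card) + G.card := by
      exact_mod_cast hcount
    have hr' : (2 : ℝ) ≤ r := by exact_mod_cast hr
    have h1 := mul_le_mul_of_nonneg_left hnu (by linarith : (0 : ℝ) ≤ 8 * r - 1)
    have h2 : 0 ≤ (14 * (r : ℝ) - 74 / 3) * (ε * n) :=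
      mul_nonneg (by linarith) (mul_nonneg hε n.cast_nonneg)
    linarith


end Tripartite
end
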